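/- arXiv:cs/0303022 — 2 statements merged into one kernel-verified Lean document; each statement's English description precedes it below -/
import Mathlib

section
/- For all n > 24, β > (log 3)/(log n), and λ > 1/2, if m = n^{1/2 + β + λ}, then P{ |∑_{i=1}^n k_i(x)(k_i(x)−1)/(m(m−1)) · 1/‖p‖² − 1| ≤ (22/5) n^{−β/2} } ≥ 1 − (10/9) e^{−n^{λ − 1/2}}, where x ∈ U^m is drawn from the product measure. -/
/-- Number of keys of the sequence `x` (counted with multiplicity) hashed into slot `i`. -/
def kcount {U : Type*} [Fintype U] {n m : ℕ} (h : U → Fin n) (x : Fin m → U) (i : Fin n) : ℕ :=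
  (Finset.univ.filter (fun j => h (x j) = i)).card

/-- Probability of a set `S` of key sequences, under the product measure induced by
the probability mass function `q` on the key space `U`. -/
noncomputable def Pr {U : Type*} [Fintype U] {m : ℕ} (q : U → ℝ) (S : Set (Fin m → U)) : ℝ :=
  ∑ x : Fin m → U, S.indicator (fun y => ∏ j, q (y j)) x

/-- The empirical collision probability `∑ i, k_i(x)(k_i(x) − 1) / (m(m−1))`
of a sequence `x` of `m` keys. -/
noncomputable def collEst {U : Type*} [Fintype U] {n m : ℕ} (h : U → Fin n)
    (x : Fin m → U) : ℝ :=
  ∑ i : Fin n, (kcount h x i : ℝ) * ((kcount h x i : ℝ) - 1) / ((m : ℝ) * ((m : ℝ) - 1))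

/-!
Let `k` be the vector of slot counts, so that `‖k‖² = m(m-1)X + m` for the collision estimator `X`.
Replacing one key changes `‖k‖` by at most `1`, and changes `⟨p, k⟩`, a sum of `m` independent
terms in `[0, ‖p‖]`, by at most `‖p‖`. McDiarmid's inequality therefore shows that, outside an
event of probability `2 exp (-2 m ‖p‖² ε²)`, both

* `‖k‖ ≤ E ‖k‖ + m ‖p‖ ε`, where `(E ‖k‖)² ≤ E ‖k‖² = m(m-1)‖p‖² + m`, and
* `⟨p, k⟩ ≥ E ⟨p, k⟩ - m ‖p‖² ε`, whence `‖k‖ ≥ ⟨p, k⟩ / ‖p‖ ≥ m ‖p‖ (1 - ε)` by Cauchy–Schwarz.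

Squaring the two bounds gives `|X - ‖p‖²| ≤ 4 (m / (m - 1)) ε ‖p‖²` as soon as `1 ≤ m ‖p‖² ε²`.
The theorem is the case `ε = n ^ (-β / 2)`, where `‖p‖² ≥ 1 / n` makes
`m ‖p‖² ε² ≥ n ^ (λ - 1 / 2)`.
-/

open Finset

section ProductExpectation

variable {U : Type*} [Fintype U] {m : ℕ} {q : U → ℝ}

/-- Expectation of `f x` when the `m` entries of `x` are drawn independently with mass
function `q`. A finite sum, so that no measurability or integrability has to be tracked. -/
noncomputable def prodExp (q : U → ℝ) (f : (Fin m → U) → ℝ) : ℝ :=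
  ∑ x, (∏ j, q (x j)) * f x

lemma prodExp_zero (f : (Fin 0 → U) → ℝ) : prodExp q f = f default := by
  simp [prodExp]

lemma prodExp_succ (f : (Fin (m + 1) → U) → ℝ) :
    prodExp q f = ∑ u, q u * prodExp q (fun x => f (Fin.cons u x)) := by
  simp only [prodExp, mul_sum]
  rw [← (Fin.consEquiv (fun _ => U)).sum_comp, Fintype.sum_prod_type]
  simp [Fin.consEquiv, Fin.prod_univ_succ, mul_assoc]

lemma prodExp_add (f g : (Fin m → U) → ℝ) :
    prodExp q (fun x => f x + g x) = prodExp q f + prodExp q g := by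
  simp [prodExp, mul_add, sum_add_distrib]

lemma prodExp_const_mul (c : ℝ) (f : (Fin m → U) → ℝ) :
    prodExp q (fun x => c * f x) = c * prodExp q f := by
  simp only [prodExp, mul_sum, mul_left_comm]

lemma prodExp_mono (hq0 : ∀ u, 0 ≤ q u) {f g : (Fin m → U) → ℝ} (hfg : ∀ x, f x ≤ g x) :
    prodExp q f ≤ prodExp q g :=
  sum_le_sum fun x _ => mul_le_mul_of_nonneg_left (hfg x) (prod_nonneg fun _ _ => hq0 _)

lemma prodExp_const (hq1 : ∑ u, q u = 1) (c : ℝ) : prodExp q (fun _ : Fin m → U => c) = c := by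
  induction m with
  | zero => exact prodExp_zero _
  | succ m ih => simp only [prodExp_succ, ih, ← sum_mul, hq1, one_mul]

lemma prodExp_sum_apply (hq1 : ∑ u, q u = 1) (g : U → ℝ) :
    prodExp q (fun x : Fin m → U => ∑ j, g (x j)) = m * ∑ u, q u * g u := by
  induction m with
  | zero => simp [prodExp_zero]
  | succ m ih =>
    simp only [prodExp_succ, Fin.sum_univ_succ, Fin.cons_zero, Fin.cons_succ, prodExp_add, ih,
      prodExp_const hq1, mul_add, sum_add_distrib, ← sum_mul, hq1]
    push_cast
    ring

lemma prodExp_sq_le (hq0 : ∀ u, 0 ≤ q u) (hq1 : ∑ u, q u = 1) (f : (Fin m → U) → ℝ) :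
    prodExp q f ^ 2 ≤ prodExp q (fun x => f x ^ 2) := by
  have tangent := prodExp_mono hq0 (f := fun x => 2 * prodExp q f * f x)
    (g := fun x => f x ^ 2 + prodExp q f ^ 2) fun x => by
      linarith [sq_nonneg (f x - prodExp q f)]
  rw [prodExp_const_mul, prodExp_add, prodExp_const hq1] at tangent
  linarith

end ProductExpectation

section Probability

variable {U : Type*} [Fintype U] {m : ℕ} {q : U → ℝ}

lemma Pr_eq_prodExp_indicator (S : Set (Fin m → U)) : Pr q S = prodExp q (S.indicator 1) := by
  refine sum_congr rfl fun x _ => ?_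
  by_cases hx : x ∈ S <;> simp [hx]

lemma one_sub_add_Pr_le (hq0 : ∀ u, 0 ≤ q u) (hq1 : ∑ u, q u = 1) {A B S : Set (Fin m → U)}
    (hcover : ∀ x, x ∉ A → x ∉ B → x ∈ S) : 1 - (Pr q A + Pr q B) ≤ Pr q S := by
  have hone (x : Fin m → U) :
      (1 : ℝ) ≤ S.indicator 1 x + (A.indicator 1 x + B.indicator 1 x) := by
    have := hcover x
    by_cases hA : x ∈ A <;> by_cases hB : x ∈ B <;> by_cases hS : x ∈ S <;> simp_all
  have := prodExp_mono hq0 hone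
  rw [prodExp_const hq1, prodExp_add, prodExp_add] at this
  simp only [Pr_eq_prodExp_indicator]
  linarith

lemma Pr_mono (hq0 : ∀ u, 0 ≤ q u) {S T : Set (Fin m → U)} (hST : S ⊆ T) : Pr q S ≤ Pr q T := by
  simp only [Pr_eq_prodExp_indicator]
  exact prodExp_mono hq0 (Set.indicator_le_indicator_of_subset hST fun _ => zero_le_one)

lemma Pr_pos_le_prodExp_exp (hq0 : ∀ u, 0 ≤ q u) (f : (Fin m → U) → ℝ) {s : ℝ} (hs : 0 ≤ s) :
    Pr q {x | 0 < f x} ≤ prodExp q (fun x => Real.exp (s * f x)) := by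
  rw [Pr_eq_prodExp_indicator]
  refine prodExp_mono hq0 fun x => Set.indicator_apply_le' (fun hx => ?_) fun _ => ?_
  · exact Real.one_le_exp (mul_nonneg hs (le_of_lt hx))
  · exact (Real.exp_pos _).le

end Probability

section McDiarmid

variable {U : Type*} [Fintype U] {m : ℕ} {q : U → ℝ}

open MeasureTheory ProbabilityTheory in
lemma hoeffding_sum_mul_exp_le (hq0 : ∀ u, 0 ≤ q u) (hq1 : ∑ u, q u = 1) {g : U → ℝ} {c : ℝ}
    (hg : ∀ u v, g u - g v ≤ c) :
    ∑ u, q u * Real.exp (g u) ≤ Real.exp (∑ u, q u * g u + c ^ 2 / 8) := by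
  let _ : MeasurableSpace U := ⊤
  let P : PMF U := PMF.ofFintype (fun u => ENNReal.ofReal (q u)) <| by
    rw [← ENNReal.ofReal_sum_of_nonneg fun u _ => hq0 u, hq1, ENNReal.ofReal_one]
  have hP (f : U → ℝ) : ∫ u, f u ∂P.toMeasure = ∑ u, q u * f u := by
    simp [PMF.integral_eq_sum, P, ENNReal.toReal_ofReal (hq0 _)]
  have : Nonempty U := P.support_nonempty.to_type
  obtain ⟨v, hv⟩ := Finite.exists_min g
  have hsub := (hasSubgaussianMGF_of_mem_Icc (μ := P.toMeasure) (X := g) (a := g v) (b := g v + c)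
    measurable_from_top.aemeasurable
    (.of_forall fun u => ⟨hv u, by linarith [hg u v]⟩)).mgf_le 1
  have hvar : ((‖c‖₊ / 2) ^ 2 : ℝ) * 1 ^ 2 / 2 = c ^ 2 / 8 := by
    rw [coe_nnnorm, div_pow, Real.norm_eq_abs, sq_abs]
    ring
  simp only [mgf, hP, one_mul, Real.exp_sub, mul_div_assoc', ← sum_div, add_sub_cancel_left,
    NNReal.coe_pow, NNReal.coe_div, NNReal.coe_ofNat, hvar] at hsub
  rwa [div_le_iff₀ (Real.exp_pos _), ← Real.exp_add, add_comm] at hsub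

lemma prodExp_exp_le_of_update_sub_le (hq0 : ∀ u, 0 ≤ q u) (hq1 : ∑ u, q u = 1)
    {f : (Fin m → U) → ℝ} {c : Fin m → ℝ}
    (hf : ∀ x j u v, f (Function.update x j u) - f (Function.update x j v) ≤ c j) :
    prodExp q (fun x => Real.exp (f x)) ≤ Real.exp (prodExp q f + (∑ j, c j ^ 2) / 8) := by
  induction m with
  | zero => simp [prodExp_zero]
  | succ m ih =>
    set g : U → ℝ := fun u => prodExp q (fun x => f (Fin.cons u x))
    set C : ℝ := ∑ j : Fin m, c j.succ ^ 2
    have hosc (u v : U) : g u - g v ≤ c 0 := by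
      have := prodExp_mono (m := m) hq0 (f := fun x => f (Fin.cons u x))
        (g := fun x => f (Fin.cons v x) + c 0) fun x => by
          have := hf (Fin.cons v x) 0 u v
          rw [Fin.update_cons_zero, Fin.update_cons_zero] at this
          linarith
      rw [prodExp_add, prodExp_const hq1] at this
      linarith
    calc prodExp q (fun x => Real.exp (f x))
        = ∑ u, q u * prodExp q (fun x => Real.exp (f (Fin.cons u x))) := prodExp_succ _
      _ ≤ ∑ u, q u * Real.exp (g u + C / 8) := by
          refine sum_le_sum fun u _ => mul_le_mul_of_nonneg_left (ih fun x j v w => ?_) (hq0 u)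
          simpa only [Fin.cons_update] using hf (Fin.cons u x) j.succ v w
      _ = (∑ u, q u * Real.exp (g u)) * Real.exp (C / 8) := by
          simp only [Real.exp_add, sum_mul, mul_assoc]
      _ ≤ Real.exp (∑ u, q u * g u + c 0 ^ 2 / 8) * Real.exp (C / 8) := by
          gcongr
          exact hoeffding_sum_mul_exp_le hq0 hq1 hosc
      _ = Real.exp (prodExp q f + (∑ j, c j ^ 2) / 8) := by
          rw [← Real.exp_add, prodExp_succ f, Fin.sum_univ_succ, add_div, add_assoc]

-- If all `c j` vanish, then `x / 0 = 0` makes the bound `1`.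
theorem mcdiarmid (hq0 : ∀ u, 0 ≤ q u) (hq1 : ∑ u, q u = 1)
    {f : (Fin m → U) → ℝ} {c : Fin m → ℝ}
    (hf : ∀ x j u v, f (Function.update x j u) - f (Function.update x j v) ≤ c j)
    {r : ℝ} (hr : 0 ≤ r) :
    Pr q {x | prodExp q f + r < f x} ≤ Real.exp (-(2 * r ^ 2 / ∑ j, c j ^ 2)) := by
  set C : ℝ := ∑ j, c j ^ 2 with hC
  -- minimizes the Chernoff exponent `s ^ 2 * C / 8 - s * r`
  set s : ℝ := 4 * r / C with hs
  have : 0 ≤ C := sum_nonneg fun j _ => sq_nonneg (c j)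
  have hs0 : 0 ≤ s := by positivity
  have hmgf := prodExp_exp_le_of_update_sub_le hq0 hq1 (f := fun x => s * f x)
    (c := fun j => s * c j) fun x j u v => by
      rw [← mul_sub]
      exact mul_le_mul_of_nonneg_left (hf x j u v) hs0
  simp only [prodExp_const_mul, mul_pow, ← mul_sum, ← hC] at hmgf
  calc Pr q {x | prodExp q f + r < f x}
      = Pr q {x | 0 < f x - (prodExp q f + r)} := by simp only [sub_pos]
    _ ≤ prodExp q (fun x => Real.exp (s * (f x - (prodExp q f + r)))) :=
        Pr_pos_le_prodExp_exp hq0 _ hs0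
    _ = Real.exp (-(s * (prodExp q f + r))) * prodExp q (fun x => Real.exp (s * f x)) := by
        simp only [← prodExp_const_mul, ← Real.exp_add]
        congr! 3
        ring
    _ ≤ Real.exp (-(s * (prodExp q f + r))) * Real.exp (s * prodExp q f + s ^ 2 * C / 8) := by
        gcongr
    _ = Real.exp (s ^ 2 * C / 8 - s * r) := by
        rw [← Real.exp_add]
        ring_nf
    _ = Real.exp (-(2 * r ^ 2 / C)) := by
        congr 1
        rcases eq_or_ne C 0 with hC' | hC'
        · simp [hs, hC']
        · rw [hs]
          field_simp
          ring

end McDiarmid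

section Slots

variable {U : Type*} [Fintype U] {n m : ℕ} {q : U → ℝ}

/-- The probability `p_i` that a key with mass function `q` is hashed into slot `i`. -/
def slotProb (q : U → ℝ) (h : U → Fin n) (i : Fin n) : ℝ :=
  ∑ u ∈ univ.filter (fun u => h u = i), q u

/-- The probability `‖p‖²` that two independent keys are hashed into the same slot. -/
def collProb (q : U → ℝ) (h : U → Fin n) : ℝ :=
  ∑ i, slotProb q h i ^ 2

lemma slotProb_nonneg (hq0 : ∀ u, 0 ≤ q u) (h : U → Fin n) (i : Fin n) : 0 ≤ slotProb q h i :=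
  sum_nonneg fun u _ => hq0 u

lemma sum_mul_apply_hash (q : U → ℝ) (h : U → Fin n) (g : Fin n → ℝ) :
    ∑ u, q u * g (h u) = ∑ i, slotProb q h i * g i := by
  simp only [slotProb, sum_mul]
  rw [← sum_fiberwise univ h]
  refine sum_congr rfl fun i _ => sum_congr rfl fun u hu => ?_
  rw [(mem_filter.1 hu).2]

lemma sum_mul_slotProb_hash (q : U → ℝ) (h : U → Fin n) :
    ∑ u, q u * slotProb q h (h u) = collProb q h := by
  simp only [collProb, sq]
  exact sum_mul_apply_hash q h _

lemma slotProb_le_sqrt_collProb (q : U → ℝ) (h : U → Fin n) (i : Fin n) :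
    slotProb q h i ≤ √(collProb q h) :=
  Real.le_sqrt_of_sq_le
    (single_le_sum (fun i _ => sq_nonneg (slotProb q h i)) (mem_univ i))

lemma collProb_nonneg (q : U → ℝ) (h : U → Fin n) : 0 ≤ collProb q h :=
  sum_nonneg fun _ _ => sq_nonneg _

lemma one_le_mul_collProb (hq1 : ∑ u, q u = 1) (h : U → Fin n) : 1 ≤ n * collProb q h := by
  have hsum : ∑ i, slotProb q h i = 1 := (sum_fiberwise univ h q).trans hq1
  simpa [hsum, collProb] using sq_sum_le_card_mul_sum_sq (s := univ) (f := slotProb q h)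

end Slots

section Counts

variable {U : Type*} [Fintype U] {n m : ℕ}

lemma kcount_eq_sum (h : U → Fin n) (x : Fin m → U) (i : Fin n) :
    (kcount h x i : ℝ) = ∑ j, if h (x j) = i then 1 else 0 := by
  simp [kcount]

lemma sum_kcount (h : U → Fin n) (x : Fin m → U) : ∑ i, (kcount h x i : ℝ) = m := by
  simp only [kcount_eq_sum]
  rw [sum_comm]
  simp

lemma sum_mul_kcount (h : U → Fin n) (g : Fin n → ℝ) (x : Fin m → U) :
    ∑ i, g i * kcount h x i = ∑ j, g (h (x j)) := by
  simp only [kcount_eq_sum, mul_sum]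
  rw [sum_comm]
  simp

lemma kcount_insertNth (h : U → Fin n) (j : Fin (m + 1)) (u : U) (x : Fin m → U) (i : Fin n) :
    (kcount h (j.insertNth u x : Fin (m + 1) → U) i : ℝ)
      = kcount h x i + if h u = i then 1 else 0 := by
  rw [kcount_eq_sum, kcount_eq_sum, Fin.sum_univ_succAbove _ j, add_comm]
  simp

lemma sum_kcount_insertNth_sq (h : U → Fin n) (j : Fin (m + 1)) (u : U) (x : Fin m → U) :
    ∑ i, (kcount h (j.insertNth u x : Fin (m + 1) → U) i : ℝ) ^ 2
      = ∑ i, (kcount h x i : ℝ) ^ 2 + (2 * kcount h x (h u) + 1) := by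
  have hsq (i : Fin n) : (kcount h (j.insertNth u x : Fin (m + 1) → U) i : ℝ) ^ 2
      = kcount h x i ^ 2 + if h u = i then 2 * (kcount h x i : ℝ) + 1 else 0 := by
    rw [kcount_insertNth]
    split_ifs <;> ring
  simp [hsq, sum_add_distrib]

lemma prodExp_kcount {q : U → ℝ} (hq1 : ∑ u, q u = 1) (h : U → Fin n) (i : Fin n) :
    prodExp q (fun x : Fin m → U => (kcount h x i : ℝ)) = m * slotProb q h i := by
  simp only [kcount_eq_sum]
  rw [prodExp_sum_apply hq1 (fun u => if h u = i then (1 : ℝ) else 0)]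
  simp [slotProb, sum_filter]

lemma prodExp_sum_kcount_sq {q : U → ℝ} (hq1 : ∑ u, q u = 1) (h : U → Fin n) :
    prodExp q (fun x : Fin m → U => ∑ i, (kcount h x i : ℝ) ^ 2)
      = m * (m - 1) * collProb q h + m := by
  induction m with
  | zero => simp [prodExp_zero, kcount]
  | succ m ih =>
    have hcross : ∑ u, q u * (2 * (m * slotProb q h (h u))) = 2 * m * collProb q h := by
      rw [← sum_mul_slotProb_hash, mul_sum]
      exact sum_congr rfl fun u _ => by ring
    simp only [prodExp_succ, ← Fin.insertNth_zero', sum_kcount_insertNth_sq, prodExp_add,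
      prodExp_const_mul, ih, prodExp_kcount hq1, prodExp_const hq1, mul_add (q _),
      sum_add_distrib, hcross, ← sum_mul, hq1]
    push_cast
    ring

/-- Euclidean norm of the vector `(k_i(x))_i` of slot counts. -/
noncomputable def countNorm (h : U → Fin n) (x : Fin m → U) : ℝ :=
  √(∑ i, (kcount h x i : ℝ) ^ 2)

lemma countNorm_sq (h : U → Fin n) (x : Fin m → U) :
    countNorm h x ^ 2 = ∑ i, (kcount h x i : ℝ) ^ 2 :=
  Real.sq_sqrt (sum_nonneg fun _ _ => sq_nonneg _)

lemma countNorm_le_insertNth (h : U → Fin n) (j : Fin (m + 1)) (u : U) (x : Fin m → U) :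
    countNorm h x ≤ countNorm h (j.insertNth u x : Fin (m + 1) → U) := by
  refine Real.sqrt_le_sqrt ?_
  rw [sum_kcount_insertNth_sq]
  exact le_add_of_nonneg_right (by positivity)

lemma countNorm_insertNth_le (h : U → Fin n) (j : Fin (m + 1)) (u : U) (x : Fin m → U) :
    countNorm h (j.insertNth u x : Fin (m + 1) → U) ≤ countNorm h x + 1 := by
  have hslot : (kcount h x (h u) : ℝ) ≤ countNorm h x := Real.le_sqrt_of_sq_le
    (single_le_sum (f := fun i => (kcount h x i : ℝ) ^ 2) (fun _ _ => sq_nonneg _)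
      (mem_univ (h u)))
  refine Real.sqrt_le_iff.2 ⟨add_nonneg (Real.sqrt_nonneg _) zero_le_one, ?_⟩
  rw [sum_kcount_insertNth_sq, ← countNorm_sq]
  linarith

-- Comparing both sides with the count vector of the other `m - 1` keys gives the difference `1`,
-- where the triangle inequality alone would give `√2`.
lemma countNorm_update_sub_le (h : U → Fin n) (x : Fin m → U) (j : Fin m) (u v : U) :
    countNorm h (Function.update x j u) - countNorm h (Function.update x j v) ≤ 1 := by
  obtain _ | m := m
  · exact j.elim0
  · rw [← Fin.insertNth_removeNth, ← Fin.insertNth_removeNth]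
    linarith [countNorm_insertNth_le h j u (j.removeNth x),
      countNorm_le_insertNth h j v (j.removeNth x)]

lemma prodExp_countNorm_sq_le {q : U → ℝ} (hq0 : ∀ u, 0 ≤ q u) (hq1 : ∑ u, q u = 1)
    (h : U → Fin n) :
    prodExp q (fun x : Fin m → U => countNorm h x) ^ 2 ≤ m * (m - 1) * collProb q h + m := by
  refine (prodExp_sq_le hq0 hq1 _).trans_eq ?_
  simp only [countNorm_sq, prodExp_sum_kcount_sq hq1]

lemma sum_slotProb_hash_le (q : U → ℝ) (h : U → Fin n) (x : Fin m → U) :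
    ∑ j, slotProb q h (h (x j)) ≤ √(collProb q h) * countNorm h x := by
  rw [← sum_mul_kcount]
  exact Real.sum_mul_le_sqrt_mul_sqrt univ _ _

lemma collEst_nonneg (h : U → Fin n) (x : Fin m → U) : 0 ≤ collEst h x := by
  have mul_pred_nonneg (k : ℕ) : (0 : ℝ) ≤ k * (k - 1) := by
    rcases k.eq_zero_or_pos with rfl | hk
    · simp
    · exact mul_nonneg k.cast_nonneg (sub_nonneg.2 (by exact_mod_cast hk))
  exact sum_nonneg fun i _ => div_nonneg (mul_pred_nonneg _) (mul_pred_nonneg _)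

lemma countNorm_sq_eq_collEst (hm : 2 ≤ m) (h : U → Fin n) (x : Fin m → U) :
    countNorm h x ^ 2 = m * (m - 1) * collEst h x + m := by
  have hm' : (2 : ℝ) ≤ m := by exact_mod_cast hm
  have hpos : (0 : ℝ) < m * (m - 1) := mul_pos (by linarith) (by linarith)
  rw [collEst, ← sum_div, mul_div_cancel₀ _ hpos.ne', countNorm_sq]
  simp only [mul_sub, mul_one, sum_sub_distrib, sum_kcount, sq]
  ring

end Counts

section Deviation

lemma sum_apply_update_sub {ι U : Type*} [Fintype ι] [DecidableEq ι] (g : U → ℝ) (x : ι → U)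
    (j : ι) (u v : U) :
    ∑ l, g (Function.update x j u l) - ∑ l, g (Function.update x j v l) = g u - g v := by
  rw [← sum_sub_distrib, sum_eq_single_of_mem j (mem_univ j) fun l _ hl => by simp [hl]]
  simp

variable {U : Type*} [Fintype U] {n m : ℕ} {q : U → ℝ}

lemma Pr_countNorm_deviation_le (hq0 : ∀ u, 0 ≤ q u) (hq1 : ∑ u, q u = 1) (h : U → Fin n)
    {r : ℝ} (hr : 0 ≤ r) :
    Pr q {x : Fin m → U | prodExp q (countNorm (m := m) h) + r < countNorm h x}
      ≤ Real.exp (-(2 * r ^ 2 / m)) := by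
  simpa using mcdiarmid hq0 hq1 (c := fun _ => 1) (countNorm_update_sub_le (m := m) h) hr

lemma Pr_sum_slotProb_deviation_le (hq0 : ∀ u, 0 ≤ q u) (hq1 : ∑ u, q u = 1) (h : U → Fin n)
    {r : ℝ} (hr : 0 ≤ r) :
    Pr q {x : Fin m → U | ∑ j, slotProb q h (h (x j)) < m * collProb q h - r}
      ≤ Real.exp (-(2 * r ^ 2 / (m * collProb q h))) := by
  have hmean : prodExp q (fun x : Fin m → U => ∑ j, -slotProb q h (h (x j)))
      = -(m * collProb q h) := by
    rw [prodExp_sum_apply hq1 fun u => -slotProb q h (h u)]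
    simp only [mul_neg, sum_neg_distrib, sum_mul_slotProb_hash]
  have hdiff (x : Fin m → U) (j : Fin m) (u v : U) :
      ∑ l, -slotProb q h (h (Function.update x j u l))
        - ∑ l, -slotProb q h (h (Function.update x j v l)) ≤ √(collProb q h) := by
    rw [sum_apply_update_sub fun w => -slotProb q h (h w)]
    linarith [slotProb_nonneg hq0 h (h u), slotProb_le_sqrt_collProb q h (h v)]
  have htail := mcdiarmid hq0 hq1 (f := fun x => ∑ j, -slotProb q h (h (x j)))
    (c := fun _ => √(collProb q h)) hdiff hr
  simp only [hmean, sum_const, card_univ, Fintype.card_fin, nsmul_eq_mul,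
    Real.sq_sqrt (collProb_nonneg q h)] at htail
  convert htail using 4 with x
  rw [sum_neg_distrib]
  exact ⟨fun hx => by linarith, fun hx => by linarith⟩

end Deviation

section RelativeError

variable {m X P N A ε : ℝ}

lemma collision_lower_bound (hm : 0 < m) (hX : 0 ≤ X) (hP : 0 ≤ P)
    (hN : N ^ 2 = m * (m - 1) * X + m) (hmε : 1 ≤ m * P * ε ^ 2) (hε : ε ≤ 1)
    (hlow : m * √P * (1 - ε) ≤ N) : P * (1 - 2 * ε) ≤ X := by
  have hnoise : m ≤ m ^ 2 * P * ε ^ 2 := by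
    linarith [mul_le_mul_of_nonneg_left hmε hm.le]
  have hscaled : m ^ 2 * (P * (1 - 2 * ε)) ≤ m ^ 2 * X := by
    have : 0 ≤ m * √P * (1 - ε) := mul_nonneg (by positivity) (by linarith)
    calc m ^ 2 * (P * (1 - 2 * ε))
        = m ^ 2 * P * (1 - ε) ^ 2 - m ^ 2 * P * ε ^ 2 := by ring
      _ ≤ m ^ 2 * P * (1 - ε) ^ 2 - m := by gcongr
      _ = (m * √P * (1 - ε)) ^ 2 - m := by rw [mul_pow, mul_pow, Real.sq_sqrt hP]
      _ ≤ N ^ 2 - m := by gcongr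
      _ = m ^ 2 * X - m * X := by rw [hN]; ring
      _ ≤ m ^ 2 * X := sub_le_self _ (by positivity)
  exact le_of_mul_le_mul_left hscaled (by positivity)

lemma collision_upper_bound (hm : 1 < m) (hP : 0 ≤ P) (hN0 : 0 ≤ N)
    (hN : N ^ 2 = m * (m - 1) * X + m) (hmε : 1 ≤ m * P * ε ^ 2) (hε0 : 0 ≤ ε) (hε1 : ε ≤ 1)
    (hA : A ^ 2 ≤ m * (m - 1) * P + m) (hup : N ≤ A + m * √P * ε) :
    X - P ≤ 4 * (m / (m - 1)) * ε * P := by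
  set M : ℝ := m * √P with hM
  have : 0 ≤ M := by positivity
  have hM2 : M ^ 2 = m ^ 2 * P := by rw [hM, mul_pow, Real.sq_sqrt hP]
  have hε2 : ε ^ 2 ≤ ε := pow_le_of_le_one hε0 hε1 two_ne_zero
  have hAM : A ≤ 3 / 2 * M := by
    have hmP : 1 ≤ m * P := hmε.trans (mul_le_of_le_one_right (by positivity) (by linarith))
    refine le_of_sq_le_sq ?_ (by positivity)
    calc A ^ 2 ≤ m * (m - 1) * P + m * 1 := by rwa [mul_one]
      _ ≤ m * m * P + m * (m * P) := by gcongr; linarith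
      _ = 2 * M ^ 2 := by rw [hM2]; ring
      _ ≤ (3 / 2 * M) ^ 2 := by linarith [sq_nonneg M]
  have hscaled : m * (m - 1) * (X - P) ≤ 4 * m ^ 2 * ε * P := by
    calc m * (m - 1) * (X - P) = N ^ 2 - (m * (m - 1) * P + m) := by rw [hN]; ring
      _ ≤ (A + M * ε) ^ 2 - A ^ 2 := by gcongr
      _ = 2 * A * (M * ε) + M ^ 2 * ε ^ 2 := by ring
      _ ≤ 2 * (3 / 2 * M) * (M * ε) + M ^ 2 * ε := by gcongr
      _ = 4 * m ^ 2 * ε * P := by linear_combination 4 * ε * hM2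
  have hm1 : 0 < m - 1 := by linarith
  have hclear : m * (m - 1) * (4 * (m / (m - 1)) * ε * P) = 4 * m ^ 2 * ε * P := by
    field_simp
  exact le_of_mul_le_mul_left (hscaled.trans_eq hclear.symm) (by positivity)

lemma abs_collision_sub_le (hm : 1 < m) (hX : 0 ≤ X) (hP : 0 ≤ P) (hN0 : 0 ≤ N)
    (hN : N ^ 2 = m * (m - 1) * X + m) (hmε : 1 ≤ m * P * ε ^ 2) (hε0 : 0 ≤ ε) (hε1 : ε ≤ 1)
    (hA : A ^ 2 ≤ m * (m - 1) * P + m) (hup : N ≤ A + m * √P * ε)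
    (hlow : m * √P * (1 - ε) ≤ N) : |X - P| ≤ 4 * (m / (m - 1)) * ε * P := by
  refine abs_sub_le_iff.2 ⟨collision_upper_bound hm hP hN0 hN hmε hε0 hε1 hA hup, ?_⟩
  have hratio : 1 ≤ m / (m - 1) := (one_le_div (by linarith)).2 (by linarith)
  calc P - X ≤ 2 * 1 * ε * P := by
        linarith [collision_lower_bound (by linarith) hX hP hN hmε hε1 hlow]
    _ ≤ 4 * (m / (m - 1)) * ε * P := by gcongr; norm_num

end RelativeError

theorem one_sub_two_mul_exp_le_Pr_abs_collEst_sub_le {U : Type*} [Fintype U] {n m : ℕ}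
    {q : U → ℝ} (hq0 : ∀ u, 0 ≤ q u) (hq1 : ∑ u, q u = 1) (h : U → Fin n) (hm : 2 ≤ m)
    {ε : ℝ} (hε0 : 0 ≤ ε) (hε1 : ε ≤ 1) (hmε : 1 ≤ m * collProb q h * ε ^ 2) :
    1 - 2 * Real.exp (-(2 * (m * collProb q h * ε ^ 2)))
      ≤ Pr q {x : Fin m → U |
          |collEst h x - collProb q h| ≤ 4 * (m / (m - 1)) * ε * collProb q h} := by
  set P := collProb q h with hP
  have hm' : (1 : ℝ) < m := by exact_mod_cast hm
  have hP0 : 0 < P := (collProb_nonneg q h).lt_of_ne' fun (h0 : P = 0) => by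
    norm_num [h0] at hmε
  have hupper := Pr_countNorm_deviation_le (m := m) hq0 hq1 h
    (by positivity : 0 ≤ m * √P * ε)
  have hlower := Pr_sum_slotProb_deviation_le (m := m) hq0 hq1 h
    (by positivity : 0 ≤ m * P * ε)
  have hupper_exponent : 2 * (m * √P * ε) ^ 2 / m = 2 * (m * P * ε ^ 2) := by
    rw [mul_pow, mul_pow, Real.sq_sqrt hP0.le]
    field_simp
  have hlower_exponent : 2 * (m * P * ε) ^ 2 / (m * P) = 2 * (m * P * ε ^ 2) := by
    field_simp
  rw [hupper_exponent] at hupper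
  rw [← hP, hlower_exponent] at hlower
  rw [two_mul (Real.exp _)]
  refine (sub_le_sub_left (add_le_add hupper hlower) 1).trans
    (one_sub_add_Pr_le hq0 hq1 fun x hup hlow => ?_)
  have hnorm : m * √P * (1 - ε) ≤ countNorm h x := by
    refine le_of_mul_le_mul_left ?_ (Real.sqrt_pos.2 hP0)
    calc √P * (m * √P * (1 - ε)) = m * P - m * P * ε := by
          linear_combination m * (1 - ε) * Real.mul_self_sqrt hP0.le
      _ ≤ ∑ j, slotProb q h (h (x j)) := not_lt.1 hlow
      _ ≤ √P * countNorm h x := sum_slotProb_hash_le q h x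
  exact abs_collision_sub_le hm' (collEst_nonneg h x) hP0.le (Real.sqrt_nonneg _)
    (countNorm_sq_eq_collEst hm h x) hmε hε0 hε1 (prodExp_countNorm_sq_le hq0 hq1 h)
    (not_lt.1 hup) hnorm

lemma two_mul_exp_neg_two_mul_le {t : ℝ} (ht : 1 ≤ t) :
    2 * Real.exp (-(2 * t)) ≤ 10 / 9 * Real.exp (-t) := by
  have hhalf : Real.exp (-t) ≤ 1 / 2 := by
    rw [Real.exp_neg, one_div]
    exact inv_anti₀ two_pos (by linarith [Real.add_one_le_exp t])
  calc 2 * Real.exp (-(2 * t)) = 2 * Real.exp (-t) * Real.exp (-t) := by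
        rw [mul_assoc, ← Real.exp_add]
        ring_nf
    _ ≤ 10 / 9 * Real.exp (-t) := by
        gcongr
        linarith

theorem one_sub_exp_le_Pr_abs_collEst_mul_inv_sub_one_le {U : Type*} [Fintype U] {n m : ℕ}
    {q : U → ℝ} (hq0 : ∀ u, 0 ≤ q u) (hq1 : ∑ u, q u = 1) (h : U → Fin n) (hm : 11 ≤ m)
    {t ε : ℝ} (hε0 : 0 ≤ ε) (hε1 : ε ≤ 1) (ht : 1 ≤ t) (htε : t ≤ m * collProb q h * ε ^ 2) :
    1 - 10 / 9 * Real.exp (-t)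
      ≤ Pr q {x : Fin m → U | |collEst h x * (1 / collProb q h) - 1| ≤ 22 / 5 * ε} := by
  have hP : 0 < collProb q h := by
    by_contra! hP
    simp only [hP.antisymm (collProb_nonneg q h), mul_zero, zero_mul] at htε
    linarith
  have hm' : (11 : ℝ) ≤ m := by exact_mod_cast hm
  have hratio : (m : ℝ) / (m - 1) ≤ 11 / 10 := by
    rw [div_le_div_iff₀ (by linarith) (by norm_num)]
    linarith
  calc 1 - 10 / 9 * Real.exp (-t) ≤ 1 - 2 * Real.exp (-(2 * t)) :=
        sub_le_sub_left (two_mul_exp_neg_two_mul_le ht) 1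
    _ ≤ 1 - 2 * Real.exp (-(2 * (m * collProb q h * ε ^ 2))) := by gcongr
    _ ≤ Pr q {x : Fin m → U |
          |collEst h x - collProb q h| ≤ 4 * (m / (m - 1)) * ε * collProb q h} :=
        one_sub_two_mul_exp_le_Pr_abs_collEst_sub_le hq0 hq1 h (by omega) hε0 hε1 (ht.trans htε)
    _ ≤ Pr q {x : Fin m → U | |collEst h x * (1 / collProb q h) - 1| ≤ 22 / 5 * ε} := by
        refine Pr_mono hq0 fun x hx => ?_
        rw [Set.mem_ofPred_eq] at hx ⊢
        rw [mul_one_div, div_sub_one hP.ne', abs_div, abs_of_pos hP,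
          div_le_iff₀ hP]
        calc |collEst h x - collProb q h| ≤ 4 * (m / (m - 1)) * ε * collProb q h := hx
          _ ≤ 4 * (11 / 10) * ε * collProb q h := by gcongr
          _ = 22 / 5 * ε * collProb q h := by ring

lemma rpow_mul_rpow_neg_half_sq {x : ℝ} (hx : 0 < x) (β lam : ℝ) :
    x ^ ((1 : ℝ) / 2 + β + lam) * (x ^ (-β / 2)) ^ 2 = x ^ (lam - 1 / 2) * x := by
  rw [← Real.rpow_mul_natCast hx.le, ← Real.rpow_add hx, ← Real.rpow_add_one hx.ne']
  congr 1
  push_cast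
  ring

theorem collision_estimator_cor3_general
    {U : Type*} [Fintype U] (n : ℕ)
    (q : U → ℝ) (hq0 : ∀ u, 0 ≤ q u) (hq1 : ∑ u, q u = 1)
    (h : U → Fin n)
    (p : Fin n → ℝ)
    (hp : ∀ i, p i = ∑ u ∈ Finset.univ.filter (fun u => h u = i), q u)
    (m : ℕ) (hm : 11 ≤ m)
    (β lam : ℝ) (hβ : 0 ≤ β) (hlam : 1 / 2 ≤ lam)
    (hmn : (m : ℝ) = (n : ℝ) ^ ((1 : ℝ) / 2 + β + lam)) :
    1 - (10 / 9) * Real.exp (-(n : ℝ) ^ (lam - 1 / 2))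
      ≤ Pr q {x : Fin m → U |
          |collEst h x * (1 / ∑ i : Fin n, p i ^ 2) - 1|
            ≤ (22 / 5) * (n : ℝ) ^ (-β / 2)} := by
  obtain rfl : p = slotProb q h := funext hp
  have hnP : 1 ≤ n * collProb q h := one_le_mul_collProb hq1 h
  have hn : (1 : ℝ) ≤ n := by
    rw [Nat.one_le_cast, Nat.one_le_iff_ne_zero]
    rintro rfl
    norm_num at hnP
  refine one_sub_exp_le_Pr_abs_collEst_mul_inv_sub_one_le hq0 hq1 h hm (by positivity)
    (Real.rpow_le_one_of_one_le_of_nonpos hn (by linarith))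
    (Real.one_le_rpow hn (by linarith)) ?_
  calc (n : ℝ) ^ (lam - 1 / 2) ≤ (n : ℝ) ^ (lam - 1 / 2) * (n * collProb q h) :=
        le_mul_of_one_le_right (by positivity) hnP
    _ = m * collProb q h * ((n : ℝ) ^ (-β / 2)) ^ 2 := by
        rw [← mul_assoc, ← rpow_mul_rpow_neg_half_sq (by linarith) β lam, ← hmn]
        ring

/-- Corollary 7 of the paper: For all `n > 24`, `β > (log 3)/(log n)`,
`λ > 1/2`, if `m = n^(1/2 + β + λ)`, then with probability at least
`1 − (10/9) e^(−n^(λ−1/2))` the empirical collision probability estimates `‖p‖²`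
within relative error `(22/5) n^(−β/2)`. -/
theorem collision_estimator_cor3
    {U : Type*} [Fintype U] [Nonempty U]
    (n : ℕ) (hn : 24 < n)
    (q : U → ℝ) (hq0 : ∀ u, 0 ≤ q u) (hq1 : ∑ u, q u = 1)
    (h : U → Fin n)
    (p : Fin n → ℝ)
    (hp : ∀ i, p i = ∑ u ∈ Finset.univ.filter (fun u => h u = i), q u)
    (m : ℕ) (hm : 2 ≤ m)
    (β lam : ℝ) (hβ : Real.log 3 / Real.log n < β) (hlam : 1 / 2 < lam)
    (hmn : (m : ℝ) = (n : ℝ) ^ ((1 : ℝ) / 2 + β + lam)) :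
    1 - (10 / 9) * Real.exp (-(n : ℝ) ^ (lam - 1 / 2))
      ≤ Pr q {x : Fin m → U |
          |collEst h x * (1 / ∑ i : Fin n, p i ^ 2) - 1|
            ≤ (22 / 5) * (n : ℝ) ^ (-β / 2)} := by
  have hβ0 : 0 ≤ β :=
    (div_nonneg (Real.log_nonneg (by norm_num)) (Real.log_natCast_nonneg n)).trans hβ.le
  have hnm : (n : ℝ) ≤ m := hmn ▸
    Real.self_le_rpow_of_one_le (Nat.one_le_cast.2 (by omega)) (by linarith)
  exact collision_estimator_cor3_general n q hq0 hq1 h p hp m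
    (by have := Nat.cast_le.1 hnm; omega) β lam hβ0 hlam.le hmn
end

section
/- For all n > 24, 0 < ε < 1/3, δ > 0, s > 0, and m = ε^{-2} n^{1+δ}, one has P(C_s) ≥ 1 − (10/9) e^{−s²/4}, where C_s = { x ∈ U^m : d_T(x, A) < s } and U^m carries the product measure. -/
/-- Talagrand's convex distance from a point `x ∈ Ω^m` to a set `A ⊆ Ω^m`:
`d_T(x,A) = sup { inf_{y ∈ A} ∑ j, α j · 1(x j ≠ y j) : α j ≥ 0, ∑ j, α j ² ≤ 1 }`. -/
noncomputable def convexDist {Ω : Type*} [DecidableEq Ω] {m : ℕ}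
    (x : Fin m → Ω) (A : Set (Fin m → Ω)) : ℝ :=
  sSup { z : ℝ | ∃ α : Fin m → ℝ, (∀ j, 0 ≤ α j) ∧ (∑ j, α j ^ 2) ≤ 1 ∧
    z = sInf { t : ℝ | ∃ y ∈ A, t = ∑ j, if x j ≠ y j then α j else 0 } }

/-!
Talagrand's inequality `P(A) · P(d_T(·, A) ≥ s) ≤ e^{-s²/4}` reduces the theorem to `P(A) ≥ 9/10`.

By Cauchy–Schwarz, `d_T(x, A)` is at most the norm of any point of the convex hull of the 0-1
vectors marking where `x` differs from the points of `A`. One selects such points `v x` with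
`E exp(‖v‖² / 4) ≤ 1 / P(A)` by induction on the number of coordinates: over the first coordinate
`u`, interpolate with weights `l`, `1 - l` between the selections for the slice of `A` at `u` and
for the projection `B` of `A`, at the price of a new coordinate `1 - l`. Hölder's inequality and a
suitable `l` bound the slice integral by `(2 - r) / P(B)`, where `r` is the ratio of the measures of
the slice and of `B`; then integrate over `u` and use `t (2 - t) ≤ 1` at `t = P(A) / P(B)`.

For `P(A)`, the collision estimate is a U-statistic of order two with mean `a = ∑ pᵢ²`. Its
Hoeffding decomposition gives the variance
`(4 (m - 2) (b - a²) + 2 (a - a²)) / (m (m - 1))` with `b = ∑ pᵢ³`.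
Since `b ≤ √n a²` and `1 ≤ n a`, this is at most `(9/10) (n/m) a² ≤ (9/10) ε² a²`, and Chebyshev's
inequality with deviation `3 ε a` leaves a failure probability of at most `1/10`.
-/

section ProductMeasure

open MeasureTheory

theorem integral_pi_fin_succ {n : ℕ} {X : Fin (n + 1) → Type*} [∀ i, MeasurableSpace (X i)]
    {E : Type*} [NormedAddCommGroup E] [NormedSpace ℝ E] (μ : ∀ i, Measure (X i))
    [∀ i, SigmaFinite (μ i)] {f : (∀ i, X i) → E} (hf : Integrable f (Measure.pi μ)) :
    ∫ x, f x ∂Measure.pi μ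
      = ∫ u, ∫ x, f (Fin.cons u x) ∂Measure.pi (fun i => μ i.succ) ∂μ 0 := by
  have e := (measurePreserving_piFinSuccAbove μ 0).symm
  rw [← e.integral_comp', integral_prod]
  · simp only [MeasurableEquiv.piFinSuccAbove_symm_apply, Fin.insertNthEquiv_zero]
    rfl
  · exact (e.integrable_comp_emb (MeasurableEquiv.measurableEmbedding _)).2 hf

theorem measureReal_pi_fin_succ {n : ℕ} {X : Fin (n + 1) → Type*} [∀ i, MeasurableSpace (X i)]
    (μ : ∀ i, Measure (X i)) [∀ i, IsFiniteMeasure (μ i)] {A : Set (∀ i, X i)}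
    (hA : MeasurableSet A) :
    (Measure.pi μ).real A
      = ∫ u, (Measure.pi fun i => μ i.succ).real {x | Fin.cons u x ∈ A} ∂μ 0 := by
  have hslice (u : X 0) : MeasurableSet {x : ∀ i : Fin n, X i.succ | Fin.cons u x ∈ A} := by
    refine hA.preimage (measurable_pi_iff.2 (Fin.cases ?_ fun i => ?_))
    · exact measurable_const
    · exact measurable_pi_apply i
  rw [← integral_indicator_one hA,
    integral_pi_fin_succ μ ((integrable_const 1).indicator hA)]
  refine integral_congr_ae (.of_forall fun u => ?_)
  exact integral_indicator_one (hslice u)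

end ProductMeasure

section Holder

open MeasureTheory

theorem integral_rpow_mul_rpow_le {α : Type*} [MeasurableSpace α] {μ : Measure α} {f g : α → ℝ}
    (hf : Integrable f μ) (hg : Integrable g μ) (hf0 : 0 ≤ f) (hg0 : 0 ≤ g) {p q : ℝ}
    (hp : 0 ≤ p) (hq : 0 ≤ q) (hpq : p + q = 1) :
    ∫ x, f x ^ p * g x ^ q ∂μ ≤ (∫ x, f x ∂μ) ^ p * (∫ x, g x ∂μ) ^ q := by
  have hfm := hf.aemeasurable
  have hgm := hg.aemeasurable
  rw [integral_eq_lintegral_of_nonneg_ae (.of_forall hf0) hf.aestronglyMeasurable,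
    integral_eq_lintegral_of_nonneg_ae (.of_forall hg0) hg.aestronglyMeasurable,
    integral_eq_lintegral_of_nonneg_ae
      (.of_forall fun x => mul_nonneg (Real.rpow_nonneg (hf0 x) p) (Real.rpow_nonneg (hg0 x) q))
      ((hfm.pow_const p).mul (hgm.pow_const q)).aestronglyMeasurable,
    ENNReal.toReal_rpow, ENNReal.toReal_rpow, ← ENNReal.toReal_mul]
  refine ENNReal.toReal_mono (ENNReal.mul_ne_top
    (ENNReal.rpow_ne_top_of_nonneg hp hf.lintegral_lt_top.ne)
    (ENNReal.rpow_ne_top_of_nonneg hq hg.lintegral_lt_top.ne)) ?_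
  simp only [ENNReal.ofReal_mul (Real.rpow_nonneg (hf0 _) p),
    ← ENNReal.ofReal_rpow_of_nonneg (hf0 _) hp, ← ENNReal.ofReal_rpow_of_nonneg (hg0 _) hq]
  exact ENNReal.lintegral_mul_norm_pow_le hfm.ennreal_ofReal hgm.ennreal_ofReal hp hq hpq

end Holder

section Interpolation

theorem exp_sub_sq_add_exp_neg_le_two {t : ℝ} (ht0 : 0 ≤ t) (ht4 : t ≤ 4) :
    Real.exp (t - t ^ 2) + Real.exp (-t) ≤ 2 := by
  have hsq : (t - t ^ 2 / 2) ^ 2 ≤ t ^ 2 :=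
    sq_le_sq' (by nlinarith) (by nlinarith)
  have hcosh : Real.cosh (t - t ^ 2 / 2) ≤ Real.exp (t ^ 2 / 2) :=
    (Real.cosh_le_exp_half_sq _).trans (Real.exp_le_exp.2 (by linarith))
  calc Real.exp (t - t ^ 2) + Real.exp (-t)
      = 2 * (Real.exp (-(t ^ 2 / 2)) * Real.cosh (t - t ^ 2 / 2)) := by
        rw [Real.cosh_eq, mul_div_assoc', mul_add, ← Real.exp_add, ← Real.exp_add]
        ring_nf
    _ ≤ 2 * (Real.exp (-(t ^ 2 / 2)) * Real.exp (t ^ 2 / 2)) := by gcongr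
    _ = 2 := by rw [← Real.exp_add, neg_add_cancel, Real.exp_zero, mul_one]

theorem exp_one_fourth_le_two_sub : Real.exp (1 / 4) ≤ 2 - Real.exp (-(1 / 2)) := by
  have := exp_sub_sq_add_exp_neg_le_two (t := 1 / 2) (by norm_num) (by norm_num)
  norm_num at this ⊢
  linarith

theorem exists_exp_mul_rpow_neg_le_two_sub {r : ℝ} (hr0 : 0 < r) (hr1 : r ≤ 1) :
    ∃ l : ℝ, 0 ≤ l ∧ l ≤ 1 ∧ Real.exp ((1 - l) ^ 2 / 4) * r ^ (-l) ≤ 2 - r := by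
  have hlog : Real.log r ≤ 0 := Real.log_nonpos hr0.le hr1
  rcases le_total (-(1 / 2)) (Real.log r) with hr | hr
  · -- `l = 1 + 2 log r` minimises the exponent `(1 - l)² / 4 - l log r` of the left-hand side.
    refine ⟨1 + 2 * Real.log r, by linarith, by linarith, ?_⟩
    have hopt := exp_sub_sq_add_exp_neg_le_two (t := -Real.log r) (by linarith) (by linarith)
    rw [neg_neg, Real.exp_log hr0] at hopt
    calc _ = Real.exp (-Real.log r - (-Real.log r) ^ 2) := by
          rw [Real.rpow_def_of_pos hr0, ← Real.exp_add]
          ring_nf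
      _ ≤ 2 - r := by linarith
  · refine ⟨0, le_rfl, zero_le_one, ?_⟩
    have hr' : r ≤ Real.exp (-(1 / 2)) := (Real.log_le_iff_le_exp hr0).1 hr
    have := exp_one_fourth_le_two_sub
    norm_num at this hr' ⊢
    linarith

theorem sum_sq_convex_comb_le {ι : Type*} (s : Finset ι) (v w : ι → ℝ) {l : ℝ} (hl0 : 0 ≤ l)
    (hl1 : l ≤ 1) :
    ∑ j ∈ s, (l * v j + (1 - l) * w j) ^ 2 ≤ l * ∑ j ∈ s, v j ^ 2 + (1 - l) * ∑ j ∈ s, w j ^ 2 := by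
  rw [Finset.mul_sum, Finset.mul_sum, ← Finset.sum_add_distrib]
  exact Finset.sum_le_sum fun j _ => by
    simpa using even_two.convexOn_pow.2 (Set.mem_univ (v j)) (Set.mem_univ (w j)) hl0
      (sub_nonneg.2 hl1) (add_sub_cancel l 1)

end Interpolation

section MismatchHull

variable {Ω : Type*} [DecidableEq Ω] {m : ℕ}

/-- The 0-1 vector marking the coordinates at which `x` and `y` differ. -/
def mismatch (x y : Fin m → Ω) : Fin m → ℝ := fun j => if x j ≠ y j then 1 else 0

/-- Talagrand's convex set of `x` with respect to `A`: the convex hull of the mismatch vectors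
from `x` to the points of `A`. Generators may be increased coordinatewise, which does not change
the distance of the hull from the origin. -/
def mismatchHull (x : Fin m → Ω) (A : Set (Fin m → Ω)) : Set (Fin m → ℝ) :=
  convexHull ℝ (upperClosure (mismatch x '' A))

theorem mem_mismatchHull_of_mismatch_le {x y : Fin m → Ω} {A : Set (Fin m → Ω)} {v : Fin m → ℝ}
    (hy : y ∈ A) (hv : mismatch x y ≤ v) : v ∈ mismatchHull x A :=
  subset_convexHull ℝ _ ⟨mismatch x y, ⟨y, hy, rfl⟩, hv⟩

theorem mismatchHull_subset {x : Fin m → Ω} {A : Set (Fin m → Ω)} {s : Set (Fin m → ℝ)}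
    (hs : Convex ℝ s) (hA : ∀ y ∈ A, ∀ v, mismatch x y ≤ v → v ∈ s) : mismatchHull x A ⊆ s := by
  refine convexHull_min ?_ hs
  rintro v ⟨_, ⟨y, hy, rfl⟩, hv⟩
  exact hA y hy v hv

theorem convexDist_le_of_mem_mismatchHull {x : Fin m → Ω} {A : Set (Fin m → Ω)} {v : Fin m → ℝ}
    (hv : v ∈ mismatchHull x A) : convexDist x A ≤ √(∑ j, v j ^ 2) := by
  refine Real.sSup_le ?_ (Real.sqrt_nonneg _)
  rintro z ⟨α, hα0, hα1, rfl⟩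
  set T := {t : ℝ | ∃ y ∈ A, t = ∑ j, if x j ≠ y j then α j else 0}
  have hT : BddBelow T := by
    refine ⟨0, ?_⟩
    rintro t ⟨y, -, rfl⟩
    exact Finset.sum_nonneg fun j _ => by split_ifs <;> simp [hα0 j]
  have hlin : IsLinearMap ℝ fun w : Fin m → ℝ => α ⬝ᵥ w :=
    ⟨dotProduct_add α, fun c => dotProduct_smul c α⟩
  have hhalf : sInf T ≤ α ⬝ᵥ v := by
    refine mismatchHull_subset (convex_halfSpace_ge hlin (sInf T)) (fun y hy w hw => ?_) hv
    refine (csInf_le hT ⟨y, hy, rfl⟩).trans (Finset.sum_le_sum fun j _ => ?_)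
    simpa [mismatch] using mul_le_mul_of_nonneg_left (hw j) (hα0 j)
  refine hhalf.trans (Real.le_sqrt_of_sq_le ?_)
  exact (Finset.sum_mul_sq_le_sq_mul_sq _ _ _).trans
    (mul_le_of_le_one_left (Finset.sum_nonneg fun j _ => sq_nonneg _) hα1)

theorem convex_preimage_cons {s : Set (Fin (m + 1) → ℝ)} (hs : Convex ℝ s) (c : ℝ) :
    Convex ℝ {v : Fin m → ℝ | (Fin.cons c v : Fin (m + 1) → ℝ) ∈ s} := by
  intro v hv w hw a b ha hb hab
  have hcons : (Fin.cons c (a • v + b • w) : Fin (m + 1) → ℝ)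
      = a • (Fin.cons c v : Fin (m + 1) → ℝ) + b • (Fin.cons c w : Fin (m + 1) → ℝ) := by
    ext j
    cases j using Fin.cases <;> simp [← add_mul, hab]
  rw [Set.mem_ofPred_eq, hcons]
  exact hs hv hw ha hb hab

theorem cons_mem_mismatchHull_cons {x : Fin m → Ω} {u : Ω} {B : Set (Fin m → Ω)}
    {A : Set (Fin (m + 1) → Ω)} {v : Fin m → ℝ} {c : ℝ} (hv : v ∈ mismatchHull x B)
    (hBA : ∀ y ∈ B, ∃ w, (Fin.cons w y : Fin (m + 1) → Ω) ∈ A ∧ (if u ≠ w then 1 else 0) ≤ c) :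
    (Fin.cons c v : Fin (m + 1) → ℝ) ∈ mismatchHull (Fin.cons u x) A := by
  refine mismatchHull_subset (convex_preimage_cons (convex_convexHull ℝ _) c)
    (fun y hy w hw => ?_) hv
  obtain ⟨z, hzA, hzc⟩ := hBA y hy
  refine mem_mismatchHull_of_mismatch_le hzA (Fin.cases ?_ fun j => ?_)
  · simpa [mismatch] using hzc
  · simpa [mismatch] using hw j

theorem cons_one_mem_mismatchHull_cons {x : Fin m → Ω} {A : Set (Fin (m + 1) → Ω)} {v : Fin m → ℝ}
    (hv : v ∈ mismatchHull x {y | ∃ w, Fin.cons w y ∈ A}) (u : Ω) :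
    (Fin.cons 1 v : Fin (m + 1) → ℝ) ∈ mismatchHull (Fin.cons u x) A :=
  cons_mem_mismatchHull_cons hv fun _ ⟨w, hw⟩ => ⟨w, hw, by split_ifs <;> simp⟩

theorem cons_zero_mem_mismatchHull_cons {x : Fin m → Ω} {u : Ω} {A : Set (Fin (m + 1) → Ω)}
    {v : Fin m → ℝ} (hv : v ∈ mismatchHull x {y | Fin.cons u y ∈ A}) :
    (Fin.cons 0 v : Fin (m + 1) → ℝ) ∈ mismatchHull (Fin.cons u x) A :=
  cons_mem_mismatchHull_cons hv fun _ hy => ⟨u, hy, by simp⟩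

theorem cons_convexComb_mem_mismatchHull_cons {x : Fin m → Ω} {u : Ω} {A : Set (Fin (m + 1) → Ω)}
    {v w : Fin m → ℝ} (hv : v ∈ mismatchHull x {y | Fin.cons u y ∈ A})
    (hw : w ∈ mismatchHull x {y | ∃ w, Fin.cons w y ∈ A}) {l : ℝ} (hl0 : 0 ≤ l) (hl1 : l ≤ 1) :
    (Fin.cons (1 - l) (l • v + (1 - l) • w) : Fin (m + 1) → ℝ)
      ∈ mismatchHull (Fin.cons u x) A := by
  have hcons : (Fin.cons (1 - l) (l • v + (1 - l) • w) : Fin (m + 1) → ℝ)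
      = l • (Fin.cons 0 v : Fin (m + 1) → ℝ) + (1 - l) • (Fin.cons 1 w : Fin (m + 1) → ℝ) := by
    ext j
    cases j using Fin.cases <;> simp
  rw [hcons]
  exact convex_convexHull ℝ _ (cons_zero_mem_mismatchHull_cons hv)
    (cons_one_mem_mismatchHull_cons hw u) hl0 (sub_nonneg.2 hl1) (add_sub_cancel l 1)

end MismatchHull

section Talagrand

open MeasureTheory

variable {Ω : Type*} [DecidableEq Ω] [MeasurableSpace Ω] {m : ℕ}

/-- Talagrand's inequality for a law `P` on `Ω ^ m`, in exponential moment form: every event `A`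
of positive probability admits a choice `v x ∈ mismatchHull x A` with `E exp (‖v‖² / 4) ≤ 1 / P A`.
Asking for a selection `v` instead of the squared distance of the hull from the origin avoids any
closedness or measurability question. -/
def SatisfiesTalagrand (P : Measure (Fin m → Ω)) : Prop :=
  ∀ A : Set (Fin m → Ω), 0 < P.real A → ∃ v : (Fin m → Ω) → Fin m → ℝ,
    (∀ x, v x ∈ mismatchHull x A) ∧ ∫ x, Real.exp ((∑ j, v x j ^ 2) / 4) ∂P ≤ (P.real A)⁻¹

theorem integral_exp_convexComb_le {α : Type*} [Finite α] [MeasurableSpace α]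
    [MeasurableSingletonClass α] {P : Measure α} [IsFiniteMeasure P] {v w : α → Fin m → ℝ}
    {a b l : ℝ} (ha : 0 < a) (hb : 0 < b)
    (hv : ∫ x, Real.exp ((∑ j, v x j ^ 2) / 4) ∂P ≤ a⁻¹)
    (hw : ∫ x, Real.exp ((∑ j, w x j ^ 2) / 4) ∂P ≤ b⁻¹) (hl0 : 0 ≤ l) (hl1 : l ≤ 1) :
    ∫ x, Real.exp (((1 - l) ^ 2 + ∑ j, (l * v x j + (1 - l) * w x j) ^ 2) / 4) ∂P
      ≤ b⁻¹ * (Real.exp ((1 - l) ^ 2 / 4) * (a / b) ^ (-l)) := by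
  have hpoint (x : α) : Real.exp (((1 - l) ^ 2 + ∑ j, (l * v x j + (1 - l) * w x j) ^ 2) / 4)
      ≤ Real.exp ((1 - l) ^ 2 / 4) * (Real.exp ((∑ j, v x j ^ 2) / 4) ^ l
        * Real.exp ((∑ j, w x j ^ 2) / 4) ^ (1 - l)) := by
    rw [← Real.exp_mul, ← Real.exp_mul, ← Real.exp_add, ← Real.exp_add, Real.exp_le_exp]
    have hsum := sum_sq_convex_comb_le Finset.univ (v x) (w x) hl0 hl1
    linarith
  have hl1' : 0 ≤ 1 - l := sub_nonneg.2 hl1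
  calc _ ≤ ∫ x, Real.exp ((1 - l) ^ 2 / 4) * (Real.exp ((∑ j, v x j ^ 2) / 4) ^ l
        * Real.exp ((∑ j, w x j ^ 2) / 4) ^ (1 - l)) ∂P :=
      integral_mono .of_finite .of_finite hpoint
    _ ≤ Real.exp ((1 - l) ^ 2 / 4) * ((∫ x, Real.exp ((∑ j, v x j ^ 2) / 4) ∂P) ^ l
        * (∫ x, Real.exp ((∑ j, w x j ^ 2) / 4) ∂P) ^ (1 - l)) := by
      rw [integral_const_mul]
      gcongr
      exact integral_rpow_mul_rpow_le .of_finite .of_finite (fun _ => (Real.exp_pos _).le)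
        (fun _ => (Real.exp_pos _).le) hl0 hl1' (add_sub_cancel l 1)
    _ ≤ Real.exp ((1 - l) ^ 2 / 4) * (a⁻¹ ^ l * b⁻¹ ^ (1 - l)) := by gcongr
    _ = b⁻¹ * (Real.exp ((1 - l) ^ 2 / 4) * (a / b) ^ (-l)) := by
      rw [Real.rpow_sub (inv_pos.2 hb), Real.rpow_one, Real.rpow_neg (div_pos ha hb).le,
        Real.div_rpow ha.le hb.le, Real.inv_rpow ha.le, Real.inv_rpow hb.le]
      field_simp

theorem satisfiesTalagrand_pi_zero (P : Measure (Fin 0 → Ω)) [IsProbabilityMeasure P] :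
    SatisfiesTalagrand P := by
  intro A hA
  obtain ⟨y, hy⟩ : A.Nonempty := nonempty_of_measureReal_ne_zero hA.ne'
  refine ⟨fun x => mismatch x y, fun x => mem_mismatchHull_of_mismatch_le hy le_rfl, ?_⟩
  simpa using (one_le_inv₀ hA).2 measureReal_le_one

variable [Finite Ω] [MeasurableSingletonClass Ω]

theorem SatisfiesTalagrand.exists_slice_selection {P : Measure (Fin m → Ω)} [IsProbabilityMeasure P]
    (hP : SatisfiesTalagrand P) {A : Set (Fin (m + 1) → Ω)}
    (hB : 0 < P.real {y | ∃ w, Fin.cons w y ∈ A}) (u : Ω) :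
    ∃ v : (Fin m → Ω) → Fin (m + 1) → ℝ, (∀ x, v x ∈ mismatchHull (Fin.cons u x) A) ∧
      ∫ x, Real.exp ((∑ j, v x j ^ 2) / 4) ∂P
        ≤ (P.real {y | ∃ w, Fin.cons w y ∈ A})⁻¹
          * (2 - P.real {y | Fin.cons u y ∈ A} / P.real {y | ∃ w, Fin.cons w y ∈ A}) := by
  obtain ⟨vB, hvB, hEB⟩ := hP _ hB
  set b := P.real {y | ∃ w, Fin.cons w y ∈ A}
  set a := P.real {y | Fin.cons u y ∈ A}
  have ha0 : 0 ≤ a := measureReal_nonneg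
  rcases ha0.eq_or_lt with ha | ha
  · refine ⟨fun x => Fin.cons 1 (vB x), fun x => cons_one_mem_mismatchHull_cons (hvB x) u, ?_⟩
    simp only [Fin.sum_univ_succ, Fin.cons_zero, Fin.cons_succ, one_pow, add_div, Real.exp_add,
      integral_const_mul]
    calc _ ≤ 2 * b⁻¹ := by
          gcongr
          linarith [exp_one_fourth_le_two_sub, Real.exp_pos (-(1 / 2))]
      _ = b⁻¹ * (2 - a / b) := by rw [← ha, zero_div, sub_zero, mul_comm]
  · obtain ⟨vA, hvA, hEA⟩ := hP _ ha
    have hab : a ≤ b := measureReal_mono fun _ hy => ⟨u, hy⟩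
    obtain ⟨l, hl0, hl1, hl⟩ :=
      exists_exp_mul_rpow_neg_le_two_sub (div_pos ha hB) ((div_le_one hB).2 hab)
    refine ⟨fun x => Fin.cons (1 - l) (l • vA x + (1 - l) • vB x),
      fun x => cons_convexComb_mem_mismatchHull_cons (hvA x) (hvB x) hl0 hl1, ?_⟩
    simpa only [Fin.sum_univ_succ, Fin.cons_zero, Fin.cons_succ, Pi.add_apply, Pi.smul_apply,
      smul_eq_mul] using
      (integral_exp_convexComb_le ha hB hEA hEB hl0 hl1).trans
        (mul_le_mul_of_nonneg_left hl (inv_nonneg.2 hB.le))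

theorem satisfiesTalagrand_pi_succ (μ : Fin (m + 1) → Measure Ω) [∀ j, IsProbabilityMeasure (μ j)]
    (ih : SatisfiesTalagrand (Measure.pi fun j : Fin m => μ j.succ)) :
    SatisfiesTalagrand (Measure.pi μ) := by
  intro A hA
  set P := Measure.pi fun j : Fin m => μ j.succ
  set b := P.real {y | ∃ w, Fin.cons w y ∈ A}
  have hslices : (Measure.pi μ).real A = ∫ u, P.real {y | Fin.cons u y ∈ A} ∂μ 0 :=
    measureReal_pi_fin_succ μ .of_discrete
  have hAb : (Measure.pi μ).real A ≤ b := by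
    calc _ ≤ ∫ _, b ∂μ 0 := hslices ▸ integral_mono .of_finite .of_finite fun u =>
          measureReal_mono fun _ hy => ⟨u, hy⟩
      _ = b := by simp
  have hb : 0 < b := hA.trans_le hAb
  choose v hv hE using ih.exists_slice_selection hb
  refine ⟨fun x => v (x 0) (Fin.tail x), fun x => ?_, ?_⟩
  · simpa only [Fin.cons_self_tail] using hv (x 0) (Fin.tail x)
  · calc _ = ∫ u, ∫ x, Real.exp ((∑ j, v u x j ^ 2) / 4) ∂P ∂μ 0 := by
          rw [integral_pi_fin_succ μ .of_finite]
          simp only [Fin.cons_zero, Fin.tail_cons, P]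
      _ ≤ ∫ u, b⁻¹ * (2 - P.real {y | Fin.cons u y ∈ A} / b) ∂μ 0 :=
          integral_mono .of_finite .of_finite hE
      _ = b⁻¹ * (2 - (Measure.pi μ).real A / b) := by
          rw [integral_const_mul, integral_sub .of_finite .of_finite, integral_div, hslices]
          simp
      _ ≤ ((Measure.pi μ).real A)⁻¹ := by
          rw [← sub_nonneg]
          have : ((Measure.pi μ).real A)⁻¹ - b⁻¹ * (2 - (Measure.pi μ).real A / b)
              = (b - (Measure.pi μ).real A) ^ 2 / ((Measure.pi μ).real A * b ^ 2) := by
            field_simp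
            ring
          rw [this]
          positivity

theorem satisfiesTalagrand_pi (μ : Fin m → Measure Ω) [∀ j, IsProbabilityMeasure (μ j)] :
    SatisfiesTalagrand (Measure.pi μ) := by
  induction m with
  | zero => exact satisfiesTalagrand_pi_zero _
  | succ m ih => exact satisfiesTalagrand_pi_succ μ (ih _)

theorem SatisfiesTalagrand.measureReal_mul_measureReal_le {P : Measure (Fin m → Ω)}
    [IsProbabilityMeasure P] (hP : SatisfiesTalagrand P) (A : Set (Fin m → Ω)) {s : ℝ}
    (hs : 0 ≤ s) : P.real A * P.real {x | s ≤ convexDist x A} ≤ Real.exp (-s ^ 2 / 4) := by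
  rcases (measureReal_nonneg : 0 ≤ P.real A).eq_or_lt with hA | hA
  · rw [← hA, zero_mul]
    exact (Real.exp_pos _).le
  obtain ⟨v, hv, hE⟩ := hP A hA
  have hsub : {x | s ≤ convexDist x A}
      ⊆ {x | Real.exp (s ^ 2 / 4) ≤ Real.exp ((∑ j, v x j ^ 2) / 4)} := by
    intro x hx
    have hsq : s ^ 2 ≤ ∑ j, v x j ^ 2 :=
      (Real.le_sqrt hs (Finset.sum_nonneg fun j _ => sq_nonneg _)).1
        (le_trans hx (convexDist_le_of_mem_mismatchHull (hv x)))
    exact Real.exp_le_exp.2 (by linarith)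
  have hmarkov : Real.exp (s ^ 2 / 4) * P.real {x | s ≤ convexDist x A} ≤ (P.real A)⁻¹ :=
    calc _ ≤ Real.exp (s ^ 2 / 4)
          * P.real {x | Real.exp (s ^ 2 / 4) ≤ Real.exp ((∑ j, v x j ^ 2) / 4)} := by
          gcongr
          exact measure_ne_top _ _
      _ ≤ ∫ x, Real.exp ((∑ j, v x j ^ 2) / 4) ∂P :=
          mul_meas_ge_le_integral_of_nonneg (.of_forall fun _ => (Real.exp_pos _).le) .of_finite _
      _ ≤ (P.real A)⁻¹ := hE
  calc P.real A * P.real {x | s ≤ convexDist x A}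
      = Real.exp (-s ^ 2 / 4) * P.real A
          * (Real.exp (s ^ 2 / 4) * P.real {x | s ≤ convexDist x A}) := by
        rw [neg_div, Real.exp_neg]
        field_simp
    _ ≤ Real.exp (-s ^ 2 / 4) * P.real A * (P.real A)⁻¹ := by gcongr
    _ = Real.exp (-s ^ 2 / 4) := mul_inv_cancel_right₀ hA.ne' _

end Talagrand

section UStatistic

open MeasureTheory ProbabilityTheory

variable {Ω : Type*} {m : ℕ}

/-- The unnormalised second-order U-statistic of the kernel `φ`: the sum of `φ` over the ordered
pairs of distinct positions of the sample `x`. -/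
def pairSum (φ : Ω → Ω → ℝ) (x : Fin m → Ω) : ℝ :=
  ∑ j, ∑ k with j ≠ k, φ (x j) (x k)

theorem pairSum_eq_sum_sum_sub_sum (φ : Ω → Ω → ℝ) (x : Fin m → Ω) :
    pairSum φ x = ∑ j, ∑ k, φ (x j) (x k) - ∑ j, φ (x j) (x j) := by
  rw [pairSum, ← Finset.sum_sub_distrib]
  refine Finset.sum_congr rfl fun j _ => ?_
  rw [eq_sub_iff_add_eq', ← Finset.sum_filter_add_sum_filter_not Finset.univ (j = ·) fun k =>
    φ (x j) (x k), Finset.filter_eq, if_pos (Finset.mem_univ j), Finset.sum_singleton]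

theorem pairSum_cons {φ : Ω → Ω → ℝ} (hφ : ∀ u w, φ u w = φ w u) (u : Ω) (x : Fin m → Ω) :
    pairSum φ (Fin.cons u x : Fin (m + 1) → Ω) = pairSum φ x + 2 * ∑ j, φ u (x j) := by
  simp only [pairSum_eq_sum_sum_sub_sum, Fin.sum_univ_succ, Fin.cons_zero, Fin.cons_succ,
    Finset.sum_add_distrib, hφ _ u]
  ring

theorem pairSum_eq_pairSum_sub_add (φ : Ω → Ω → ℝ) (g : Ω → ℝ) (x : Fin m → Ω) :
    pairSum φ x = pairSum (fun u w => φ u w - (g u + g w)) x + 2 * (m - 1) * ∑ j, g (x j) := by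
  simp only [pairSum_eq_sum_sum_sub_sum, Finset.sum_sub_distrib, Finset.sum_add_distrib,
    Finset.sum_const, Finset.card_univ, Fintype.card_fin, nsmul_eq_mul, ← Finset.mul_sum]
  ring

variable [MeasurableSpace Ω]

/-- A symmetric kernel all of whose one-variable sections have mean zero. -/
structure IsDegenerateKernel (μ : Measure Ω) (ψ : Ω → Ω → ℝ) : Prop where
  symm : ∀ u w, ψ u w = ψ w u
  integral_eq_zero : ∀ u, ∫ w, ψ u w ∂μ = 0

theorem IsDegenerateKernel.integral_left_eq_zero {μ : Measure Ω} {ψ : Ω → Ω → ℝ}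
    (hψ : IsDegenerateKernel μ ψ) (w : Ω) : ∫ u, ψ u w ∂μ = 0 := by
  simp only [hψ.symm _ w, hψ.integral_eq_zero]

variable [Finite Ω] [MeasurableSingletonClass Ω] {μ : Measure Ω} [IsProbabilityMeasure μ]

theorem integral_sum_eval (f : Ω → ℝ) :
    ∫ x, ∑ j, f (x j) ∂Measure.pi (fun _ : Fin m => μ) = m * ∫ u, f u ∂μ := by
  rw [integral_finsetSum _ fun _ _ => .of_finite]
  simp [integral_comp_eval (μ := fun _ : Fin m => μ) (f := f) .of_discrete]

theorem variance_sum_eval (f : Ω → ℝ) :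
    Var[fun x => ∑ j, f (x j); Measure.pi fun _ : Fin m => μ] = m * Var[f; μ] := by
  simpa [Finset.sum_fn] using
    variance_sum_pi (μ := fun _ : Fin m => μ) (X := fun _ => f) fun _ => .of_discrete

theorem integral_pairSum {φ : Ω → Ω → ℝ} (hφ : ∀ u w, φ u w = φ w u) :
    ∫ x, pairSum φ x ∂Measure.pi (fun _ : Fin m => μ) = m * (m - 1) * ∫ u, ∫ w, φ u w ∂μ ∂μ := by
  induction m with
  | zero => simp [pairSum]
  | succ m ih =>
    rw [integral_pi_fin_succ _ .of_finite]
    simp only [pairSum_cons hφ, integral_add Integrable.of_finite Integrable.of_finite,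
      integral_const_mul, integral_sum_eval, ih, integral_const, probReal_univ, one_smul]
    push_cast
    ring

namespace IsDegenerateKernel

variable {ψ : Ω → Ω → ℝ}

theorem integral_integral_mul_sum_eq_zero (hψ : IsDegenerateKernel μ ψ) (F : (Fin m → Ω) → ℝ) :
    ∫ u, ∫ x, F x * ∑ j, ψ u (x j) ∂Measure.pi (fun _ : Fin m => μ) ∂μ = 0 := by
  rw [integral_integral_swap .of_finite]
  simp [integral_const_mul, integral_finsetSum _ fun _ _ => Integrable.of_finite,
    hψ.integral_left_eq_zero]

theorem integral_pairSum_eq_zero (hψ : IsDegenerateKernel μ ψ) :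
    ∫ x, pairSum ψ x ∂Measure.pi (fun _ : Fin m => μ) = 0 := by
  simp [integral_pairSum hψ.symm, hψ.integral_eq_zero]

theorem integral_pairSum_mul_sum_eq_zero (hψ : IsDegenerateKernel μ ψ) (g : Ω → ℝ) :
    ∫ x, pairSum ψ x * ∑ j, g (x j) ∂Measure.pi (fun _ : Fin m => μ) = 0 := by
  induction m with
  | zero => simp
  | succ m ih =>
    have hexpand (u : Ω) (x : Fin m → Ω) :
        (pairSum ψ x + 2 * ∑ j, ψ u (x j)) * (g u + ∑ j, g (x j))
          = pairSum ψ x * ∑ j, g (x j) + g u * pairSum ψ x + 2 * g u * ∑ j, ψ u (x j)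
            + 2 * ((∑ j, g (x j)) * ∑ j, ψ u (x j)) := by ring
    rw [integral_pi_fin_succ _ .of_finite]
    simp only [pairSum_cons hψ.symm, Fin.sum_univ_succ, Fin.cons_zero, Fin.cons_succ, hexpand,
      integral_add Integrable.of_finite Integrable.of_finite, integral_const_mul, ih,
      integral_sum_eval, hψ.integral_eq_zero, hψ.integral_pairSum_eq_zero,
      hψ.integral_integral_mul_sum_eq_zero, mul_zero, integral_zero, add_zero]

theorem integral_pairSum_sq (hψ : IsDegenerateKernel μ ψ) :
    ∫ x, pairSum ψ x ^ 2 ∂Measure.pi (fun _ : Fin m => μ)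
      = 2 * m * (m - 1) * ∫ u, ∫ w, ψ u w ^ 2 ∂μ ∂μ := by
  induction m with
  | zero => simp [pairSum]
  | succ m ih =>
    have hsq (u : Ω) : ∫ x, (∑ j, ψ u (x j)) ^ 2 ∂Measure.pi (fun _ : Fin m => μ)
        = m * ∫ w, ψ u w ^ 2 ∂μ := by
      rw [← variance_of_integral_eq_zero .of_discrete (hψ.integral_eq_zero u), ← variance_sum_eval,
        variance_of_integral_eq_zero .of_discrete]
      rw [integral_sum_eval, hψ.integral_eq_zero, mul_zero]
    have hexpand (u : Ω) (x : Fin m → Ω) : (pairSum ψ x + 2 * ∑ j, ψ u (x j)) ^ 2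
        = pairSum ψ x ^ 2 + 4 * (pairSum ψ x * ∑ j, ψ u (x j)) + 4 * (∑ j, ψ u (x j)) ^ 2 := by
      ring
    rw [integral_pi_fin_succ _ .of_finite]
    simp only [pairSum_cons hψ.symm, hexpand, hsq,
      integral_add Integrable.of_finite Integrable.of_finite, integral_const_mul, ih,
      hψ.integral_integral_mul_sum_eq_zero, integral_const, probReal_univ, one_smul]
    push_cast
    ring

theorem variance_uncurry_add (hψ : IsDegenerateKernel μ ψ) (g : Ω → ℝ) :
    Var[fun z => ψ z.1 z.2 + (g z.1 + g z.2); μ.prod μ]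
      = ∫ u, ∫ w, ψ u w ^ 2 ∂μ ∂μ + 2 * Var[g; μ] := by
  have hmean : ∫ z, ψ z.1 z.2 ∂μ.prod μ = 0 := by
    simp [integral_prod _ Integrable.of_finite, hψ.integral_eq_zero]
  have hcov : ∫ z, ψ z.1 z.2 * (g z.1 + g z.2) ∂μ.prod μ = 0 := by
    simp only [mul_add, integral_add Integrable.of_finite Integrable.of_finite]
    rw [integral_prod _ .of_finite, integral_prod_symm _ .of_finite]
    simp [integral_mul_const, hψ.integral_eq_zero, hψ.integral_left_eq_zero]
  rw [variance_fun_add .of_discrete .of_discrete, covariance_eq_sub .of_discrete .of_discrete,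
    variance_add_prod .of_discrete .of_discrete, variance_of_integral_eq_zero .of_discrete hmean,
    integral_prod _ .of_finite]
  simp only [Pi.mul_apply, hmean, hcov]
  ring

theorem variance_pairSum_add_sum (hψ : IsDegenerateKernel μ ψ) (g : Ω → ℝ) (c : ℝ) :
    Var[fun x => pairSum ψ x + c * ∑ j, g (x j); Measure.pi fun _ : Fin m => μ]
      = 2 * m * (m - 1) * ∫ u, ∫ w, ψ u w ^ 2 ∂μ ∂μ + c ^ 2 * (m * Var[g; μ]) := by
  have hcov : cov[pairSum ψ, fun x => ∑ j, g (x j); Measure.pi fun _ : Fin m => μ] = 0 := by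
    rw [covariance_eq_sub .of_discrete .of_discrete, hψ.integral_pairSum_eq_zero, zero_mul,
      sub_zero]
    exact hψ.integral_pairSum_mul_sum_eq_zero g
  rw [variance_fun_add .of_discrete .of_discrete, covariance_const_mul_right, hcov,
    variance_const_mul, variance_sum_eval,
    variance_of_integral_eq_zero .of_discrete hψ.integral_pairSum_eq_zero, hψ.integral_pairSum_sq]
  ring

end IsDegenerateKernel

theorem isDegenerateKernel_sub_projection {φ : Ω → Ω → ℝ} (hφ : ∀ u w, φ u w = φ w u) {g : Ω → ℝ}
    (hg : ∀ u, g u = ∫ w, φ u w ∂μ - (∫ v, ∫ w, φ v w ∂μ ∂μ) / 2) :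
    IsDegenerateKernel μ fun u w => φ u w - (g u + g w) where
  symm u w := by rw [hφ, add_comm (g u)]
  integral_eq_zero u := by
    simp only [integral_sub Integrable.of_finite Integrable.of_finite,
      integral_add Integrable.of_finite Integrable.of_finite, integral_const, probReal_univ,
      one_smul, hg]
    ring

-- Hoeffding's decomposition: subtracting the projection `g` from `φ` leaves a degenerate kernel,
-- whose `pairSum` is uncorrelated with the sum of `g`.
theorem variance_pairSum {φ : Ω → Ω → ℝ} (hφ : ∀ u w, φ u w = φ w u) :
    Var[pairSum φ; Measure.pi fun _ : Fin m => μ]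
      = 4 * m * (m - 1) * (m - 2) * Var[fun u => ∫ w, φ u w ∂μ; μ]
        + 2 * m * (m - 1) * Var[fun z => φ z.1 z.2; μ.prod μ] := by
  set g : Ω → ℝ := fun u => ∫ w, φ u w ∂μ - (∫ v, ∫ w, φ v w ∂μ ∂μ) / 2
  have hψ : IsDegenerateKernel μ fun u w => φ u w - (g u + g w) :=
    isDegenerateKernel_sub_projection hφ fun _ => rfl
  have hproj : Var[fun u => ∫ w, φ u w ∂μ; μ] = Var[g; μ] :=
    (variance_sub_const .of_discrete _).symm
  have hkernel := hψ.variance_uncurry_add g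
  simp only [sub_add_cancel] at hkernel
  rw [hproj, hkernel, funext (pairSum_eq_pairSum_sub_add φ g), hψ.variance_pairSum_add_sum]
  ring

end UStatistic

section PowerSums

variable {ι : Type*}

theorem sq_sum_cube_le (s : Finset ι) (p : ι → ℝ) :
    (∑ i ∈ s, p i ^ 3) ^ 2 ≤ (∑ i ∈ s, p i ^ 2) ^ 3 := by
  calc (∑ i ∈ s, p i ^ 3) ^ 2 = (∑ i ∈ s, p i * p i ^ 2) ^ 2 := by simp only [pow_succ']
    _ ≤ (∑ i ∈ s, p i ^ 2) * ∑ i ∈ s, (p i ^ 2) ^ 2 := Finset.sum_mul_sq_le_sq_mul_sq s _ _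
    _ ≤ (∑ i ∈ s, p i ^ 2) * (∑ i ∈ s, p i ^ 2) ^ 2 := by
      gcongr
      exact Finset.sum_sq_le_sq_sum_of_nonneg fun i _ => sq_nonneg (p i)
    _ = (∑ i ∈ s, p i ^ 2) ^ 3 := (pow_succ' _ 2).symm

variable {s : Finset ι} {p : ι → ℝ}

theorem one_le_card_mul_sum_sq (hp : ∑ i ∈ s, p i = 1) : 1 ≤ s.card * ∑ i ∈ s, p i ^ 2 := by
  simpa [hp] using sq_sum_le_card_mul_sum_sq (s := s) (f := p)

theorem sum_cube_le_sqrt_card_mul (hp : ∑ i ∈ s, p i = 1) :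
    ∑ i ∈ s, p i ^ 3 ≤ √s.card * (∑ i ∈ s, p i ^ 2) ^ 2 := by
  refine le_of_sq_le_sq ?_ (by positivity)
  calc (∑ i ∈ s, p i ^ 3) ^ 2 ≤ (∑ i ∈ s, p i ^ 2) ^ 3 * 1 := by simpa using sq_sum_cube_le s p
    _ ≤ (∑ i ∈ s, p i ^ 2) ^ 3 * (s.card * ∑ i ∈ s, p i ^ 2) := by
      gcongr
      exact one_le_card_mul_sum_sq hp
    _ = (√s.card * (∑ i ∈ s, p i ^ 2) ^ 2) ^ 2 := by
      rw [mul_pow, Real.sq_sqrt (Nat.cast_nonneg _)]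
      ring

end PowerSums

section Chebyshev

open MeasureTheory ProbabilityTheory

theorem one_sub_variance_div_sq_le_measureReal {Ω : Type*} [MeasurableSpace Ω] {P : Measure Ω}
    [IsProbabilityMeasure P] {X : Ω → ℝ} (hX : MemLp X 2 P) {c : ℝ} (hc : 0 < c) :
    1 - Var[X; P] / c ^ 2 ≤ P.real {x | |X x - ∫ y, X y ∂P| ≤ c} := by
  have hcheb : P.real {x | c ≤ |X x - ∫ y, X y ∂P|} ≤ Var[X; P] / c ^ 2 :=
    ENNReal.toReal_le_of_le_ofReal (div_nonneg (variance_nonneg _ _) (sq_nonneg c))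
      (meas_ge_le_variance_div_sq hX hc)
  have hcover : {x | |X x - ∫ y, X y ∂P| ≤ c} ∪ {x | c ≤ |X x - ∫ y, X y ∂P|} = Set.univ :=
    Set.eq_univ_of_forall fun x => le_total |X x - ∫ y, X y ∂P| c
  have hunion := measureReal_union_le (μ := P) {x | |X x - ∫ y, X y ∂P| ≤ c}
    {x | c ≤ |X x - ∫ y, X y ∂P|}
  rw [hcover, probReal_univ] at hunion
  linarith

end Chebyshev

section CollisionKernel

open MeasureTheory ProbabilityTheory

theorem integral_comp_eq_sum_measureReal {Ω ι : Type*} [MeasurableSpace Ω] [Fintype ι]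
    {μ : Measure Ω} [IsFiniteMeasure μ] {h : Ω → ι} (hh : ∀ i, MeasurableSet (h ⁻¹' {i}))
    (g : ι → ℝ) : ∫ u, g (h u) ∂μ = ∑ i, μ.real (h ⁻¹' {i}) * g i := by
  let _ : MeasurableSpace ι := ⊤
  have hh' : Measurable h := measurable_to_countable' hh
  rw [← integral_map hh'.aemeasurable .of_discrete, integral_fintype .of_finite]
  simp [map_measureReal_apply hh']

theorem sum_measureReal_preimage_singleton_eq_one {Ω ι : Type*} [MeasurableSpace Ω] [Fintype ι]
    {μ : Measure Ω} [IsProbabilityMeasure μ] {h : Ω → ι} (hh : ∀ i, MeasurableSet (h ⁻¹' {i})) :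
    ∑ i, μ.real (h ⁻¹' {i}) = 1 := by
  simpa using (integral_comp_eq_sum_measureReal (μ := μ) hh fun _ => 1).symm

variable {Ω ι : Type*} [DecidableEq ι]

/-- The indicator that two keys collide under `h`; its `pairSum` counts collisions. -/
def collisionKernel (h : Ω → ι) (u w : Ω) : ℝ :=
  if h u = h w then 1 else 0

theorem collisionKernel_comm (h : Ω → ι) (u w : Ω) :
    collisionKernel h u w = collisionKernel h w u := by
  simp only [collisionKernel, eq_comm]

variable [Finite Ω] [MeasurableSpace Ω] [MeasurableSingletonClass Ω] {μ : Measure Ω}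

theorem integral_collisionKernel (h : Ω → ι) (u : Ω) :
    ∫ w, collisionKernel h u w ∂μ = μ.real (h ⁻¹' {h u}) := by
  rw [← integral_indicator_one .of_discrete]
  simp [collisionKernel, Set.indicator, eq_comm]

variable [Fintype ι] [IsProbabilityMeasure μ]

theorem integral_integral_collisionKernel (h : Ω → ι) :
    ∫ u, ∫ w, collisionKernel h u w ∂μ ∂μ = ∑ i, μ.real (h ⁻¹' {i}) ^ 2 := by
  simp only [integral_collisionKernel, sq]
  exact integral_comp_eq_sum_measureReal (fun _ => .of_discrete) fun i => μ.real (h ⁻¹' {i})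

theorem variance_integral_collisionKernel (h : Ω → ι) :
    Var[fun u => ∫ w, collisionKernel h u w ∂μ; μ]
      = ∑ i, μ.real (h ⁻¹' {i}) ^ 3 - (∑ i, μ.real (h ⁻¹' {i}) ^ 2) ^ 2 := by
  rw [variance_eq_sub .of_discrete, integral_integral_collisionKernel]
  simp only [Pi.pow_apply, integral_collisionKernel, pow_succ' _ 2]
  rw [integral_comp_eq_sum_measureReal (fun _ => .of_discrete) fun i => μ.real (h ⁻¹' {i}) ^ 2]

theorem variance_collisionKernel (h : Ω → ι) :
    Var[fun z => collisionKernel h z.1 z.2; μ.prod μ]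
      = ∑ i, μ.real (h ⁻¹' {i}) ^ 2 - (∑ i, μ.real (h ⁻¹' {i}) ^ 2) ^ 2 := by
  have hidem (u w : Ω) : collisionKernel h u w ^ 2 = collisionKernel h u w := by
    simp [collisionKernel]
  rw [variance_eq_sub .of_discrete]
  simp only [Pi.pow_apply, hidem]
  rw [integral_prod _ .of_finite, integral_integral_collisionKernel]

end CollisionKernel

section CollisionEstimate

open MeasureTheory ProbabilityTheory

variable {U : Type*} [Fintype U] {n m : ℕ}

theorem sum_kcount_mul (h : U → Fin n) (x : Fin m → U) (f : Fin n → ℝ) :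
    ∑ i, kcount h x i * f i = ∑ j, f (h (x j)) := by
  simp only [kcount, Finset.card_filter, Nat.cast_sum, Nat.cast_ite, Nat.cast_one, Nat.cast_zero,
    Finset.sum_mul, ite_mul, one_mul, zero_mul]
  rw [Finset.sum_comm]
  simp

theorem collEst_eq_inv_mul_pairSum (h : U → Fin n) (x : Fin m → U) :
    collEst h x = (m * (m - 1) : ℝ)⁻¹ * pairSum (collisionKernel h) x := by
  rw [collEst, ← Finset.sum_div, sum_kcount_mul h x fun i => (kcount h x i : ℝ) - 1,
    pairSum_eq_sum_sum_sub_sum, ← Finset.sum_sub_distrib, inv_mul_eq_div]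
  simp [kcount, collisionKernel, eq_comm]

variable [MeasurableSpace U] [MeasurableSingletonClass U] {μ : Measure U} [IsProbabilityMeasure μ]

theorem integral_collEst (h : U → Fin n) (hm : 2 ≤ m) :
    ∫ x, collEst h x ∂Measure.pi (fun _ : Fin m => μ) = ∑ i, μ.real (h ⁻¹' {i}) ^ 2 := by
  have hm' : (2 : ℝ) ≤ m := by exact_mod_cast hm
  have hpairs : (m : ℝ) * (m - 1) ≠ 0 := by nlinarith
  simp only [collEst_eq_inv_mul_pairSum]
  rw [integral_const_mul, integral_pairSum (collisionKernel_comm h),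
    integral_integral_collisionKernel, inv_mul_cancel_left₀ hpairs]

theorem variance_collEst (h : U → Fin n) (hm : 2 ≤ m) :
    Var[collEst h; Measure.pi fun _ : Fin m => μ]
      = (4 * (m - 2) * (∑ i, μ.real (h ⁻¹' {i}) ^ 3 - (∑ i, μ.real (h ⁻¹' {i}) ^ 2) ^ 2)
          + 2 * (∑ i, μ.real (h ⁻¹' {i}) ^ 2 - (∑ i, μ.real (h ⁻¹' {i}) ^ 2) ^ 2))
        / (m * (m - 1)) := by
  have hm' : (2 : ℝ) ≤ m := by exact_mod_cast hm
  have hm0 : (m : ℝ) ≠ 0 := by linarith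
  have hm1 : (m : ℝ) - 1 ≠ 0 := by linarith
  rw [funext (collEst_eq_inv_mul_pairSum h), variance_const_mul,
    variance_pairSum (collisionKernel_comm h), variance_integral_collisionKernel,
    variance_collisionKernel]
  field_simp

theorem variance_collEst_le (h : U → Fin n) (hn : 25 ≤ n) (hm : 13 ≤ m) :
    Var[collEst h; Measure.pi fun _ : Fin m => μ]
      ≤ 9 / 10 * (n / m) * (∑ i, μ.real (h ⁻¹' {i}) ^ 2) ^ 2 := by
  have hp := sum_measureReal_preimage_singleton_eq_one (μ := μ) (h := h) fun _ => .of_discrete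
  have hsq := one_le_card_mul_sum_sq hp
  have hcube := sum_cube_le_sqrt_card_mul hp
  rw [Finset.card_univ, Fintype.card_fin] at hsq hcube
  rw [variance_collEst h (by lia)]
  set a := ∑ i, μ.real (h ⁻¹' {i}) ^ 2
  set b := ∑ i, μ.real (h ⁻¹' {i}) ^ 3
  have ha0 : 0 ≤ a := Finset.sum_nonneg fun i _ => sq_nonneg _
  have hm' : (13 : ℝ) ≤ m := by exact_mod_cast hm
  have hn' : (25 : ℝ) ≤ n := by exact_mod_cast hn
  have ha : a ≤ n * a ^ 2 := by nlinarith
  have hsqrt : 5 * √n ≤ n := by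
    have h5 : 5 ≤ √n := Real.le_sqrt_of_sq_le (by linarith)
    nlinarith [Real.mul_self_sqrt (Nat.cast_nonneg (α := ℝ) n)]
  have hb : 5 * b ≤ n * a ^ 2 := by nlinarith [sq_nonneg a]
  rw [div_le_iff₀ (by nlinarith)]
  calc 4 * (m - 2) * (b - a ^ 2) + 2 * (a - a ^ 2) ≤ 4 * (m - 2) * b + 2 * a := by nlinarith
    _ ≤ 4 / 5 * (m - 2) * (n * a ^ 2) + 2 * (n * a ^ 2) := by nlinarith
    _ ≤ 9 / 10 * (m - 1) * (n * a ^ 2) := by nlinarith [show 0 ≤ n * a ^ 2 by positivity]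
    _ = 9 / 10 * (n / m) * a ^ 2 * (m * (m - 1)) := by field_simp

theorem one_sub_le_measureReal_collEst (h : U → Fin n) (hn : 25 ≤ n) (hm : 13 ≤ m) {c : ℝ}
    (hc : 0 < c) :
    1 - 9 / 10 * (n / m) / c ^ 2 ≤ (Measure.pi fun _ : Fin m => μ).real
      {x | |collEst h x * (1 / ∑ i, μ.real (h ⁻¹' {i}) ^ 2) - 1| ≤ c} := by
  have hvar := variance_collEst_le (μ := μ) h hn hm
  have hmean := integral_collEst (μ := μ) h (by lia : 2 ≤ m)
  have hp := sum_measureReal_preimage_singleton_eq_one (μ := μ) (h := h) fun _ => .of_discrete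
  have hsq := one_le_card_mul_sum_sq hp
  set a := ∑ i, μ.real (h ⁻¹' {i}) ^ 2
  have ha : 0 < a := pos_of_mul_pos_right (by linarith) (Nat.cast_nonneg _)
  have hrel (x : Fin m → U) : |collEst h x * (1 / a) - 1| ≤ c ↔ |collEst h x - a| ≤ c * a := by
    rw [show collEst h x * (1 / a) - 1 = (collEst h x - a) / a by field_simp, abs_div,
      abs_of_pos ha, div_le_iff₀ ha]
  have hcheb := one_sub_variance_div_sq_le_measureReal (P := Measure.pi fun _ : Fin m => μ)
    (X := collEst h) .of_discrete (mul_pos hc ha)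
  simp only [hmean, ← hrel] at hcheb
  refine le_trans (sub_le_sub_left ?_ 1) hcheb
  rw [div_le_div_iff₀ (by positivity) (by positivity)]
  calc Var[collEst h; Measure.pi fun _ : Fin m => μ] * c ^ 2
      ≤ 9 / 10 * (n / m) * a ^ 2 * c ^ 2 := by gcongr
    _ = 9 / 10 * (n / m) * (c * a) ^ 2 := by ring

end CollisionEstimate

section KeyDistribution

open MeasureTheory

theorem exists_isProbabilityMeasure_measureReal_singleton {Ω : Type*} [Fintype Ω]
    [MeasurableSpace Ω] [MeasurableSingletonClass Ω] {q : Ω → ℝ} (hq0 : ∀ u, 0 ≤ q u)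
    (hq1 : ∑ u, q u = 1) :
    ∃ μ : Measure Ω, IsProbabilityMeasure μ ∧ ∀ u, μ.real {u} = q u := by
  have hsum : ∑ u, ENNReal.ofReal (q u) = 1 := by
    rw [← ENNReal.ofReal_sum_of_nonneg fun u _ => hq0 u, hq1, ENNReal.ofReal_one]
  refine ⟨(PMF.ofFintype _ hsum).toMeasure, inferInstance, fun u => ?_⟩
  rw [measureReal_def, PMF.toMeasure_apply_singleton _ _ (measurableSet_singleton u),
    PMF.ofFintype_apply, ENNReal.toReal_ofReal (hq0 u)]

theorem measureReal_eq_sum_indicator {Ω : Type*} [Fintype Ω] [MeasurableSpace Ω]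
    [MeasurableSingletonClass Ω] (μ : Measure Ω) [IsFiniteMeasure μ] (S : Set Ω) :
    μ.real S = ∑ u, S.indicator (fun u => μ.real {u}) u := by
  classical
  rw [Finset.sum_indicator_eq_sum_filter, sum_measureReal_singleton]
  simp

variable {U : Type*} [Fintype U] [MeasurableSpace U] [MeasurableSingletonClass U]
  {μ : Measure U} [IsProbabilityMeasure μ] {q : U → ℝ}

theorem Pr_eq_measureReal_pi (hq : ∀ u, μ.real {u} = q u) {m : ℕ} (S : Set (Fin m → U)) :
    Pr q S = (Measure.pi fun _ => μ).real S := by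
  have hatom (x : Fin m → U) : (Measure.pi fun _ => μ).real {x} = ∏ j, q (x j) := by
    simp [measureReal_def, Measure.pi_singleton, ENNReal.toReal_prod, ← hq]
  rw [Pr, measureReal_eq_sum_indicator]
  simp only [hatom]

theorem measureReal_preimage_singleton_eq_sum {n : ℕ} (hq : ∀ u, μ.real {u} = q u) (h : U → Fin n)
    (i : Fin n) : μ.real (h ⁻¹' {i}) = ∑ u with h u = i, q u := by
  classical
  rw [measureReal_eq_sum_indicator, Finset.sum_indicator_eq_sum_filter]
  simp [hq]

end KeyDistribution

section Concentration

open MeasureTheory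

theorem one_sub_exp_le_measureReal_convexDist_lt {Ω : Type*} [DecidableEq Ω] [Finite Ω]
    [MeasurableSpace Ω] [MeasurableSingletonClass Ω] {m : ℕ} (μ : Fin m → Measure Ω)
    [∀ j, IsProbabilityMeasure (μ j)] {A : Set (Fin m → Ω)} {c s : ℝ} (hc : 0 < c)
    (hA : c ≤ (Measure.pi μ).real A) (hs : 0 ≤ s) :
    1 - c⁻¹ * Real.exp (-s ^ 2 / 4) ≤ (Measure.pi μ).real {x | convexDist x A < s} := by
  have htail := (satisfiesTalagrand_pi μ).measureReal_mul_measureReal_le A hs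
  have hcompl : {x | convexDist x A < s} = {x | s ≤ convexDist x A}ᶜ := by
    ext x
    simp
  rw [hcompl, probReal_compl_eq_one_sub .of_discrete]
  refine sub_le_sub_left ((le_inv_mul_iff₀ hc).2 (le_trans ?_ htail)) 1
  gcongr

end Concentration

theorem le_sq_mul_of_eq_rpow {x ε δ m : ℝ} (hx : 1 ≤ x) (hε : 0 < ε) (hδ : 0 ≤ δ)
    (hm : m = ε ^ (-2 : ℝ) * x ^ (1 + δ)) : x ≤ ε ^ 2 * m := by
  have hcancel : ε ^ 2 * ε ^ (-2 : ℝ) = 1 := by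
    rw [← Real.rpow_natCast, ← Real.rpow_add hε]
    norm_num
  calc x = x ^ (1 : ℝ) := (Real.rpow_one x).symm
    _ ≤ x ^ (1 + δ) := Real.rpow_le_rpow_of_exponent_le hx (by linarith)
    _ = ε ^ 2 * m := by rw [hm, ← mul_assoc, hcancel, one_mul]

theorem prob_Cs_ge_general {U : Type*} [Fintype U] [DecidableEq U] (n : ℕ) (hn : 24 < n)
    (q : U → ℝ) (hq0 : ∀ u, 0 ≤ q u) (hq1 : ∑ u, q u = 1) (h : U → Fin n) (p : Fin n → ℝ)
    (hp : ∀ i, p i = ∑ u ∈ Finset.univ.filter (fun u => h u = i), q u) (m : ℕ) (hm : 13 ≤ m)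
    (ε s : ℝ) (hε : 0 < ε) (hs : 0 ≤ s) (hmn : (n : ℝ) ≤ ε ^ 2 * m) :
    1 - (10 / 9) * Real.exp (-s ^ 2 / 4)
      ≤ Pr q {x : Fin m → U |
          convexDist x
              {y : Fin m → U |
                |collEst h y * (1 / ∑ i : Fin n, p i ^ 2) - 1| ≤ 3 * ε}
            < s} := by
  let _ : MeasurableSpace U := ⊤
  obtain ⟨μ, _, hμ⟩ := exists_isProbabilityMeasure_measureReal_singleton hq0 hq1
  have hm0 : (0 : ℝ) < m := by exact_mod_cast (by lia : 0 < m)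
  have hratio : 9 / 10 * (n / m) / (3 * ε) ^ 2 ≤ 1 / 10 := by
    rw [div_le_iff₀ (by positivity)]
    linarith [(div_le_iff₀ hm0).2 hmn]
  have hA := one_sub_le_measureReal_collEst (μ := μ) h hn hm (by positivity : 0 < 3 * ε)
  simp only [measureReal_preimage_singleton_eq_sum hμ, ← hp] at hA
  rw [Pr_eq_measureReal_pi hμ]
  simpa only [inv_div] using one_sub_exp_le_measureReal_convexDist_lt (fun _ => μ)
    (by norm_num : (0 : ℝ) < 9 / 10) (le_trans (by linarith) hA) hs

/-- inequality (1) of the paper: For all `n > 24`, `0 < ε < 1/3`,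
`δ > 0`, `s > 0`, and `m = ε⁻² n^(1+δ)`, the set
`C_s = { x : d_T(x, A) < s }` has probability at least `1 − (10/9) e^(−s²/4)`,
where `A` is the set of sequences whose empirical collision probability estimates
`‖p‖²` within relative error `3ε`. -/
theorem prob_Cs_ge
    {U : Type*} [Fintype U] [Nonempty U] [DecidableEq U]
    (n : ℕ) (hn : 24 < n)
    (q : U → ℝ) (hq0 : ∀ u, 0 ≤ q u) (hq1 : ∑ u, q u = 1)
    (h : U → Fin n)
    (p : Fin n → ℝ)
    (hp : ∀ i, p i = ∑ u ∈ Finset.univ.filter (fun u => h u = i), q u)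
    (m : ℕ) (hm : 2 ≤ m)
    (ε δ s : ℝ) (hε0 : 0 < ε) (hε : ε < 1 / 3) (hδ : 0 < δ) (hs : 0 < s)
    (hmn : (m : ℝ) = ε ^ (-2 : ℝ) * (n : ℝ) ^ (1 + δ)) :
    1 - (10 / 9) * Real.exp (-s ^ 2 / 4)
      ≤ Pr q {x : Fin m → U |
          convexDist x
              {y : Fin m → U |
                |collEst h y * (1 / ∑ i : Fin n, p i ^ 2) - 1| ≤ 3 * ε}
            < s} := by
  have hn' : (24 : ℝ) < n := by exact_mod_cast hn
  have hmn' : (n : ℝ) ≤ ε ^ 2 * m := le_sq_mul_of_eq_rpow (by linarith) hε0 hδ.le hmn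
  have hm13 : (13 : ℝ) ≤ m := by nlinarith
  exact prob_Cs_ge_general n hn q hq0 hq1 h p hp m (by exact_mod_cast hm13) ε s hε0 hs.le hmn'
end
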